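/- Let X be a sesquiclosed commutative scheme on Ω satisfying the e₁/e₀-condition, X' a scheme on Ω', and φ : X → X' a sesquiclosed algebraic isomorphism. With the notation X₀ = X_{Ω/e₀}, φ₀ = φ_{Ω/e₀}, and for points α ∈ Ω, α' ∈ Ω': α₀ = αe₀, α'₀ = α'e'₀, Δ the class of e₁ containing α, Δ' the class of e'₁ containing α', Δ₀ = Δ/e₀, X₁ = X_Δ, X'₁ = X'_{Δ'}, φ₁ = φ_{Δ,Δ'} — assume that (i) X₀ and X₁ are schurian and Iso(X₀, X'₀, φ₀) ≠ ∅ ≠ Iso(X₁, X'₁, φ₁), and (ii) the coherent configurations ((X₀)_{α₀})_{Δ₀} and ((X₁)_α)_{Δ₀} are partly regular. Then Iso_{α₀,α'₀}(X₀, X'₀, φ₀)^{Δ₀} = Iso_{α,α'}(X₁, X'₁, φ₁)^{Δ₀}. -/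

import Mathlib

open Set

universe u

/-- A coherent configuration on a finite set `Ω`: a partition `S` of `Ω × Ω`
satisfying (C1) the diagonal is a union of classes, (C2) closure under converse,
(C3) well-defined intersection numbers. -/
structure CohCfg (Ω : Type u) : Type u where
  S : Set (Set (Ω × Ω))
  finite : Finite Ω
  cover : ∀ p : Ω × Ω, ∃ s ∈ S, p ∈ s
  disj : ∀ s ∈ S, ∀ t ∈ S, s ≠ t → s ∩ t = ∅
  nonemp : ∀ s ∈ S, s.Nonempty
  diag : ∀ s ∈ S, (∃ p ∈ s, p.1 = p.2) → ∀ p ∈ s, p.1 = p.2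
  conv : ∀ s ∈ S, {p : Ω × Ω | (p.2, p.1) ∈ s} ∈ S
  inum : ∀ r ∈ S, ∀ s ∈ S, ∀ t ∈ S, ∀ p ∈ t, ∀ q ∈ t,
    {γ : Ω | (p.1, γ) ∈ r ∧ (γ, p.2) ∈ s}.ncard =
    {γ : Ω | (q.1, γ) ∈ r ∧ (γ, q.2) ∈ s}.ncard

namespace CohCfg

variable {Ω Ω' : Type u}

/-- The intersection number `c^t_{rs}` computed at the pair `p`. -/
noncomputable def cnum (r s : Set (Ω × Ω)) (p : Ω × Ω) : ℕ :=
  {γ : Ω | (p.1, γ) ∈ r ∧ (γ, p.2) ∈ s}.ncard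

/-- `X` is a scheme (homogeneous) if the full diagonal is a basis relation. -/
def IsScheme (X : CohCfg Ω) : Prop := {p : Ω × Ω | p.1 = p.2} ∈ X.S

/-- Commutativity: `c^t_{rs} = c^t_{sr}`. -/
def IsCommutative (X : CohCfg Ω) : Prop :=
  ∀ r ∈ X.S, ∀ s ∈ X.S, ∀ p : Ω × Ω, cnum r s p = cnum s r p

/-- `s` is a relation of `X`, i.e. a union of basis relations. -/
def IsRelationOf (X : CohCfg Ω) (s : Set (Ω × Ω)) : Prop :=
  ∀ t ∈ X.S, (t ∩ s).Nonempty → t ⊆ s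

/-- `X ≤ Y`: every (basis) relation of `X` is a relation of `Y`. -/
def le (X Y : CohCfg Ω) : Prop := ∀ s ∈ X.S, IsRelationOf Y s

/-- The diagonal relation `1_Δ` of a subset `Δ`. -/
def diagRel (Δ : Set Ω) : Set (Ω × Ω) := {p | p.1 = p.2 ∧ p.1 ∈ Δ}

/-- `Δ` is a fiber of `X`. -/
def IsFiber (X : CohCfg Ω) (Δ : Set Ω) : Prop := diagRel Δ ∈ X.S

/-- `αs = {β | (α,β) ∈ s}`. -/
def pointSet (s : Set (Ω × Ω)) (α : Ω) : Set Ω := {β | (α, β) ∈ s}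

/-- `X` is partly regular: some point `α` has `|αs| ≤ 1` for all basis relations. -/
def PartlyRegular (X : CohCfg Ω) : Prop :=
  ∃ α : Ω, ∀ s ∈ X.S, (pointSet s α).ncard ≤ 1

/-- The image `s^f` of a relation under a map of points. -/
def relImage (f : Ω → Ω') (s : Set (Ω × Ω)) : Set (Ω' × Ω') :=
  (fun p : Ω × Ω => (f p.1, f p.2)) '' s

/-- `φ` is an algebraic isomorphism from `X` to `X'`. -/
structure IsAlgIso (X : CohCfg Ω) (X' : CohCfg Ω')
    (φ : Set (Ω × Ω) → Set (Ω' × Ω')) : Prop where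
  bijOn : Set.BijOn φ X.S X'.S
  cnum_eq : ∀ r ∈ X.S, ∀ s ∈ X.S, ∀ t ∈ X.S, ∀ p ∈ t, ∀ q ∈ φ t,
    cnum r s p = cnum (φ r) (φ s) q

/-- The natural extension of an algebraic isomorphism to unions of basis relations. -/
def algImage (X : CohCfg Ω) (φ : Set (Ω × Ω) → Set (Ω' × Ω')) (s : Set (Ω × Ω)) :
    Set (Ω' × Ω') := ⋃₀ (φ '' {t | t ∈ X.S ∧ t ⊆ s})

/-- The image `Δ^φ` of a fiber under an algebraic isomorphism. -/
def fiberImage (X : CohCfg Ω) (φ : Set (Ω × Ω) → Set (Ω' × Ω')) (Δ : Set Ω) : Set Ω' :=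
  {α' | (α', α') ∈ φ (diagRel Δ)}

/-- `Y` is the point extension `X_α`: the smallest coherent configuration `≥ X`
having `1_α` as a basis relation. -/
def IsPointExt (X : CohCfg Ω) (α : Ω) (Y : CohCfg Ω) : Prop :=
  le X Y ∧ ({(α, α)} : Set (Ω × Ω)) ∈ Y.S ∧
    ∀ Z : CohCfg Ω, le X Z → ({(α, α)} : Set (Ω × Ω)) ∈ Z.S → le Y Z

/-- `φ` has an `(α,α')`-extension: an algebraic isomorphism `X_α → X'_{α'}`
extending `φ` and sending `1_α` to `1_{α'}`. -/
def HasExtension (X : CohCfg Ω) (X' : CohCfg Ω') (φ : Set (Ω × Ω) → Set (Ω' × Ω'))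
    (α : Ω) (α' : Ω') : Prop :=
  ∃ (Y : CohCfg Ω) (Y' : CohCfg Ω') (ψ : Set (Ω × Ω) → Set (Ω' × Ω')),
    IsPointExt X α Y ∧ IsPointExt X' α' Y' ∧ IsAlgIso Y Y' ψ ∧
    (∀ s ∈ X.S, algImage Y ψ s = φ s) ∧ ψ {(α, α)} = {(α', α')}

/-- A sesquiclosed algebraic isomorphism: has an `(α,α')`-extension for all
`α ∈ Δ ∈ F(X)` and `α' ∈ Δ^φ`. -/
def SesquiclosedIso (X : CohCfg Ω) (X' : CohCfg Ω')
    (φ : Set (Ω × Ω) → Set (Ω' × Ω')) : Prop :=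
  IsAlgIso X X' φ ∧
  ∀ Δ : Set Ω, IsFiber X Δ → ∀ α ∈ Δ, ∀ α' ∈ fiberImage X φ Δ, HasExtension X X' φ α α'

/-- `φ` is induced by the combinatorial isomorphism `f`. -/
def InducedBy (X : CohCfg Ω) (X' : CohCfg Ω') (φ : Set (Ω × Ω) → Set (Ω' × Ω'))
    (f : Ω → Ω') : Prop :=
  Function.Bijective f ∧ ∀ s ∈ X.S, φ s = relImage f s

/-- `X` is separable: every algebraic isomorphism from `X` is induced by an isomorphism. -/
def Separable (X : CohCfg Ω) : Prop :=
  ∀ (Ω'' : Type u) (X' : CohCfg Ω'') (φ : Set (Ω × Ω) → Set (Ω'' × Ω'')),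
    IsAlgIso X X' φ → ∃ f : Ω → Ω'', InducedBy X X' φ f

/-- `X` is sesquiseparable: every sesquiclosed algebraic isomorphism from `X`
is induced by an isomorphism. -/
def Sesquiseparable (X : CohCfg Ω) : Prop :=
  ∀ (Ω'' : Type u) (X' : CohCfg Ω'') (φ : Set (Ω × Ω) → Set (Ω'' × Ω'')),
    SesquiclosedIso X X' φ → ∃ f : Ω → Ω'', InducedBy X X' φ f

/-- A sesquiclosed coherent configuration: (S1) the fibers of every one-point
extension `X_α` are the nonempty sets `αs`, and (S2) the identity algebraic
automorphism is sesquiclosed. -/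
def SesquiclosedCfg (X : CohCfg Ω) : Prop :=
  (∀ α : Ω, ∀ Y : CohCfg Ω, IsPointExt X α Y →
     ∀ Δ : Set Ω, (IsFiber Y Δ ↔ ∃ s ∈ X.S, Δ = pointSet s α ∧ Δ.Nonempty)) ∧
  SesquiclosedIso X X id

/-- A parabolic of `X`: a relation that is an equivalence relation on `Ω`. -/
def IsParabolic (X : CohCfg Ω) (e : Set (Ω × Ω)) : Prop :=
  IsRelationOf X e ∧ (∀ a : Ω, (a, a) ∈ e) ∧ (∀ p ∈ e, (p.2, p.1) ∈ e) ∧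
    ∀ a b c : Ω, (a, b) ∈ e → (b, c) ∈ e → (a, c) ∈ e

/-- The class of `a` modulo the equivalence relation `e`. -/
def eClass (e : Set (Ω × Ω)) (a : Ω) : Set Ω := {b | (a, b) ∈ e}

/-- `Δ/e` is a section of `X`: `e` is a parabolic and `Δ` is a class of a
parabolic containing `e`. -/
def IsSection (X : CohCfg Ω) (Δ : Set Ω) (e : Set (Ω × Ω)) : Prop :=
  IsParabolic X e ∧ ∃ d : Set (Ω × Ω), IsParabolic X d ∧ e ⊆ d ∧ ∃ a : Ω, Δ = eClass d a

/-- The point set of the section `Δ/e`: the `e`-classes of points of `Δ`. -/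
abbrev Sec (Δ : Set Ω) (e : Set (Ω × Ω)) : Type u :=
  {Γ : Set Ω // ∃ a ∈ Δ, Γ = eClass e a}

/-- The relation `s_𝔖` on the section `𝔖 = Δ/e`. -/
def secRel (Δ : Set Ω) (e : Set (Ω × Ω)) (s : Set (Ω × Ω)) :
    Set (Sec Δ e × Sec Δ e) :=
  {p | ∃ a ∈ p.1.1, ∃ b ∈ p.2.1, (a, b) ∈ s}

/-- `Y` is the coherent configuration `X_𝔖` on the section `𝔖 = Δ/e`. -/
def IsSectionCfg (X : CohCfg Ω) (Δ : Set Ω) (e : Set (Ω × Ω))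
    (Y : CohCfg (Sec Δ e)) : Prop :=
  Y.S = {t | ∃ s ∈ X.S, t = secRel Δ e s ∧ t.Nonempty}

/-- The restriction `s_Δ` of a relation to a subset `Δ`. -/
def restRel (Δ : Set Ω) (s : Set (Ω × Ω)) : Set (↥Δ × ↥Δ) := {p | (p.1.1, p.2.1) ∈ s}

/-- `Y` is the restriction `X_Δ` of `X` to `Δ`. -/
def IsRestrictionCfg (X : CohCfg Ω) (Δ : Set Ω) (Y : CohCfg ↥Δ) : Prop :=
  Y.S = {t | ∃ s ∈ X.S, t = restRel Δ s ∧ t.Nonempty}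

/-- `Iso(X, X', φ)`: isomorphisms inducing the algebraic isomorphism `φ`. -/
def IsoSet (X : CohCfg Ω) (X' : CohCfg Ω') (φ : Set (Ω × Ω) → Set (Ω' × Ω')) :
    Set (Ω → Ω') :=
  {f | Function.Bijective f ∧ ∀ s ∈ X.S, relImage f s = φ s}

/-- `X` is schurian: its basis relations are the orbits of `Aut(X)` on `Ω × Ω`. -/
def Schurian (X : CohCfg Ω) : Prop :=
  ∀ s ∈ X.S, ∀ p ∈ s, ∀ q ∈ s, ∃ f : Ω → Ω,
    (Function.Bijective f ∧ ∀ t ∈ X.S, relImage f t = t) ∧ (f p.1, f p.2) = q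

/-- `e ⊆ rad(s)`: `s` is a union of products of pairs of `e`-classes it meets. -/
def RadGE (e s : Set (Ω × Ω)) : Prop :=
  ∀ p ∈ s, ∀ a b : Ω, (p.1, a) ∈ e → (p.2, b) ∈ e → (a, b) ∈ s

/-- The `e₁/e₀`-condition: every basis relation disjoint from `e₁` has `e₀` in
its radical. -/
def WedgeCond (X : CohCfg Ω) (e0 e1 : Set (Ω × Ω)) : Prop :=
  ∀ s ∈ X.S, s ∩ e1 = ∅ → RadGE e0 s

/-- A circulant coherent configuration on a group `G`: right translations are
automorphisms. -/
def IsCirculant {G : Type u} [Group G] (X : CohCfg G) : Prop :=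
  ∀ g : G, ∀ s ∈ X.S, relImage (fun x => x * g) s = s

/-- The equivalence relation `e(H)` whose classes are the cosets of `H`. -/
def eRelSet {G : Type u} [Group G] (H : Subgroup G) : Set (G × G) :=
  {p | p.1⁻¹ * p.2 ∈ H}

/-- `H` is an `X`-group. -/
def IsXGroup {G : Type u} [Group G] (X : CohCfg G) (H : Subgroup G) : Prop :=
  IsParabolic X (eRelSet H)

/-- A normal circulant scheme: every automorphism fixing the identity is a
group automorphism. -/
def IsNormalCirc {G : Type u} [Group G] (X : CohCfg G) : Prop :=
  ∀ f : G → G, Function.Bijective f → (∀ s ∈ X.S, relImage f s = s) → f 1 = 1 →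
    ∀ a b : G, f (a * b) = f a * f b

/-- Normality of a circulant scheme presented on a section `Δ/e` of a group `G`
(the points are cosets): every automorphism fixing the class of `1` respects the
coset multiplication. -/
def IsNormalSec {G : Type u} [Group G] (Δ : Set G) (e : Set (G × G))
    (Y : CohCfg (Sec Δ e)) : Prop :=
  ∀ F : Sec Δ e → Sec Δ e, Function.Bijective F → (∀ t ∈ Y.S, relImage F t = t) →
    (∀ Γ : Sec Δ e, (1 : G) ∈ Γ.1 → F Γ = Γ) →
    ∀ Γ Γ' Γ'' : Sec Δ e, Γ''.1 = Set.image2 (· * ·) Γ.1 Γ'.1 →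
      (F Γ'').1 = Set.image2 (· * ·) (F Γ).1 (F Γ').1

/-- Normality of a circulant scheme presented on (the subtype of) a subgroup `U ⊆ G`. -/
def IsNormalRest {G : Type u} [Group G] (U : Set G) (Y : CohCfg ↥U) : Prop :=
  ∀ F : ↥U → ↥U, Function.Bijective F → (∀ t ∈ Y.S, relImage F t = t) →
    (∀ x : ↥U, x.1 = 1 → F x = x) →
    ∀ x y z : ↥U, z.1 = x.1 * y.1 → (F z).1 = (F x).1 * (F y).1

/-- `N` is an `X_U`-group: `N ≤ U` and the restriction of `e(N)` to `U` is a
relation of the restriction `X_U`. -/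
def SubXGroup {G : Type u} [Group G] (X : CohCfg G) (U N : Subgroup G) : Prop :=
  N ≤ U ∧ ∀ s ∈ X.S, (∃ p ∈ s, p.1 ∈ U ∧ p.2 ∈ U ∧ p.1⁻¹ * p.2 ∈ N) →
    ∀ p ∈ s, p.1 ∈ U → p.2 ∈ U → p.1⁻¹ * p.2 ∈ N


/-! ### Corresponding pairs and relations -/

/-- The pairs `p` and `q` lie in corresponding basis relations. -/
def Rl (X : CohCfg Ω) (φ : Set (Ω × Ω) → Set (Ω' × Ω')) (p : Ω × Ω) (q : Ω' × Ω') : Prop :=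
  ∃ t ∈ X.S, p ∈ t ∧ q ∈ φ t

/-- The relations `s` and `s'` correspond to each other under `φ`. -/
def Corr (X : CohCfg Ω) (φ : Set (Ω × Ω) → Set (Ω' × Ω')) (s : Set (Ω × Ω))
    (s' : Set (Ω' × Ω')) : Prop :=
  ∀ p q, Rl X φ p q → (p ∈ s ↔ q ∈ s')

theorem eq_of_mem (X : CohCfg Ω) {s t : Set (Ω × Ω)} (hs : s ∈ X.S) (ht : t ∈ X.S)
    {p : Ω × Ω} (h1 : p ∈ s) (h2 : p ∈ t) : s = t := by
  by_contra h
  have := X.disj s hs t ht h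
  have h3 : p ∈ s ∩ t := ⟨h1, h2⟩
  rw [this] at h3
  exact h3

theorem isAlgIso_id (X : CohCfg Ω) : IsAlgIso X X id :=
  ⟨Set.bijOn_id _, fun r hr s hs t ht p hp q hq => X.inum r hr s hs t ht p hp q hq⟩

section algiso
variable {X : CohCfg Ω} {X' : CohCfg Ω'} {φ : Set (Ω × Ω) → Set (Ω' × Ω')}

theorem rl_left (hφ : IsAlgIso X X' φ) (p : Ω × Ω) : ∃ q, Rl X φ p q := by
  obtain ⟨t, ht, hp⟩ := X.cover p
  obtain ⟨q, hq⟩ := X'.nonemp _ (hφ.bijOn.mapsTo ht)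
  exact ⟨q, t, ht, hp, hq⟩

theorem rl_right (hφ : IsAlgIso X X' φ) (q : Ω' × Ω') : ∃ p, Rl X φ p q := by
  obtain ⟨t', ht', hq⟩ := X'.cover q
  obtain ⟨t, ht, rfl⟩ := hφ.bijOn.surjOn ht'
  obtain ⟨p, hp⟩ := X.nonemp _ ht
  exact ⟨p, t, ht, hp, hq⟩

theorem corr_basis (hφ : IsAlgIso X X' φ) {s : Set (Ω × Ω)} (hs : s ∈ X.S) :
    Corr X φ s (φ s) := by
  rintro p q ⟨t, ht, hp, hq⟩
  constructor
  · intro h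
    rwa [eq_of_mem X hs ht h hp]
  · intro h
    have := eq_of_mem X' (hφ.bijOn.mapsTo hs) (hφ.bijOn.mapsTo ht) h hq
    rwa [hφ.bijOn.injOn hs ht this]

theorem corr_algImage (hφ : IsAlgIso X X' φ) {s : Set (Ω × Ω)} (hs : IsRelationOf X s) :
    Corr X φ s (algImage X φ s) := by
  rintro p q ⟨t, ht, hp, hq⟩
  constructor
  · intro h
    exact ⟨φ t, ⟨t, ⟨ht, hs t ht ⟨p, hp, h⟩⟩, rfl⟩, hq⟩
  · rintro ⟨_, ⟨t1, ⟨ht1, hts⟩, rfl⟩, hq1⟩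
    have := eq_of_mem X' (hφ.bijOn.mapsTo ht1) (hφ.bijOn.mapsTo ht) hq1 hq
    have := hφ.bijOn.injOn ht1 ht this
    subst this
    exact hts hp

/-- A bijection of points compatible with a pair of corresponding pairs. -/
theorem exists_equiv (hφ : IsAlgIso X X' φ) {p : Ω × Ω} {q : Ω' × Ω'} (h : Rl X φ p q) :
    ∃ σ : Ω ≃ Ω', ∀ z, Rl X φ (p.1, z) (q.1, σ z) ∧ Rl X φ (z, p.2) (σ z, q.2) := by
  classical
  have hc : ∀ p : Ω × Ω, ∃ s : X.S, p ∈ s.1 := fun p => by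
    obtain ⟨s, hs, hp⟩ := X.cover p
    exact ⟨⟨s, hs⟩, hp⟩
  have hc' : ∀ q : Ω' × Ω', ∃ s : X.S, q ∈ φ s.1 := fun q => by
    obtain ⟨p, s, hs, -, hq⟩ := rl_right hφ q
    exact ⟨⟨s, hs⟩, hq⟩
  choose c hcm using hc
  choose c' hcm' using hc'
  have hcu : ∀ p (s : X.S), c p = s ↔ p ∈ s.1 := fun p s =>
    ⟨fun h => h ▸ hcm p, fun h => Subtype.ext (eq_of_mem X (c p).2 s.2 (hcm p) h)⟩
  have hcu' : ∀ q (s : X.S), c' q = s ↔ q ∈ φ s.1 := fun q s =>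
    ⟨fun h => h ▸ hcm' q, fun h => Subtype.ext (hφ.bijOn.injOn (c' q).2 s.2
      (eq_of_mem X' (hφ.bijOn.mapsTo (c' q).2) (hφ.bijOn.mapsTo s.2) (hcm' q) h))⟩
  obtain ⟨t, ht, hp, hq⟩ := h
  let f : Ω → X.S × X.S := fun z => (c (p.1, z), c (z, p.2))
  let f' : Ω' → X.S × X.S := fun z => (c' (q.1, z), c' (z, q.2))
  haveI := X.finite
  haveI := X'.finite
  have he : ∀ k, Nonempty ({a // f a = k} ≃ {b // f' b = k}) := by
    rintro ⟨r, s⟩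
    refine Finite.card_eq.1 ?_
    have := hφ.cnum_eq r.1 r.2 s.1 s.2 t ht p hp q hq
    unfold cnum at this
    rw [← Nat.card_coe_set_eq, ← Nat.card_coe_set_eq] at this
    have e1 : {γ | (p.1, γ) ∈ r.1 ∧ (γ, p.2) ∈ s.1} = {a | f a = (r, s)} := by
      ext z; simp [f, Prod.ext_iff, hcu]
    have e2 : {γ | (q.1, γ) ∈ φ r.1 ∧ (γ, q.2) ∈ φ s.1} = {a | f' a = (r, s)} := by
      ext z; simp [f', Prod.ext_iff, hcu']
    rw [e1, e2] at this
    exact this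
  let σ : Ω ≃ Ω' := Equiv.ofFiberEquiv (f := f) (g := f') fun k => (he k).some
  refine ⟨σ, fun z => ?_⟩
  have hz : f' (σ z) = f z := Equiv.ofFiberEquiv_map _ z
  have h1 : c' (q.1, σ z) = c (p.1, z) := congrArg Prod.fst hz
  have h2 : c' (σ z, q.2) = c (z, p.2) := congrArg Prod.snd hz
  exact ⟨⟨_, (c (p.1, z)).2, hcm _, (hcu' _ _).1 h1⟩, ⟨_, (c (z, p.2)).2, hcm _, (hcu' _ _).1 h2⟩⟩

theorem rl_ext (hφ : IsAlgIso X X' φ) {x y : Ω} {x' y' : Ω'} (h : Rl X φ (x, y) (x', y'))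
    (z : Ω) : ∃ z', Rl X φ (x, z) (x', z') ∧ Rl X φ (z, y) (z', y') := by
  obtain ⟨σ, hσ⟩ := exists_equiv hφ h
  exact ⟨σ z, hσ z⟩

theorem rl_ext' (hφ : IsAlgIso X X' φ) {x y : Ω} {x' y' : Ω'} (h : Rl X φ (x, y) (x', y'))
    (z' : Ω') : ∃ z, Rl X φ (x, z) (x', z') ∧ Rl X φ (z, y) (z', y') := by
  obtain ⟨σ, hσ⟩ := exists_equiv hφ h
  refine ⟨σ.symm z', ?_⟩
  have := hσ (σ.symm z')
  simpa using this

theorem cnum_corr (hφ : IsAlgIso X X' φ) {p : Ω × Ω} {q : Ω' × Ω'} (h : Rl X φ p q)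
    {r s : Set (Ω × Ω)} {r' s' : Set (Ω' × Ω')} (hr : Corr X φ r r') (hs : Corr X φ s s') :
    cnum r s p = cnum r' s' q := by
  obtain ⟨σ, hσ⟩ := exists_equiv hφ h
  unfold cnum
  rw [← Set.ncard_image_of_injective _ σ.injective]
  congr 1
  ext z'
  constructor
  · rintro ⟨z, ⟨h1, h2⟩, rfl⟩
    exact ⟨(hr _ _ (hσ z).1).1 h1, (hs _ _ (hσ z).2).1 h2⟩
  · rintro ⟨h1, h2⟩
    refine ⟨σ.symm z', ?_, by simp⟩
    have := hσ (σ.symm z')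
    rw [Equiv.apply_symm_apply] at this
    exact ⟨(hr _ _ this.1).2 h1, (hs _ _ this.2).2 h2⟩

theorem rl_diag (hφ : IsAlgIso X X' φ) {x y : Ω} {x' y' : Ω'} (h : Rl X φ (x, y) (x', y')) :
    x = y ↔ x' = y' := by
  -- backward direction for arbitrary pairs
  have key : ∀ (x y : Ω) (x' : Ω'), Rl X φ (x, y) (x', x') → x = y := by
    intro x y x' h
    obtain ⟨z', h1, h2⟩ := rl_ext hφ h x
    obtain ⟨r, hr, hxy, hr'⟩ := h
    obtain ⟨t, ht, hxx, ht'⟩ := h1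
    have := (corr_basis hφ hr (x, y) (z', x') h2).1 hxy
    have e : z' = x' := X'.diag _ (hφ.bijOn.mapsTo hr) ⟨_, hr', rfl⟩ _ this
    subst e
    have e2 := eq_of_mem X' (hφ.bijOn.mapsTo hr) (hφ.bijOn.mapsTo ht) hr' ht'
    have e3 := hφ.bijOn.injOn hr ht e2
    subst e3
    exact X.diag _ hr ⟨_, hxx, rfl⟩ _ hxy
  constructor
  · rintro rfl
    -- `(x', x')` has a preimage `(x, z)`, `(z, x)`
    obtain ⟨z, h1, h2⟩ := rl_ext' hφ h x'
    have := key _ _ _ h1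
    subst this
    obtain ⟨r, hr, hxy, hr'⟩ := h
    have h3 := (corr_basis hφ hr _ _ h1).1 hxy
    exact X'.diag _ (hφ.bijOn.mapsTo hr) ⟨_, h3, rfl⟩ _ hr'
  · rintro rfl
    exact key _ _ _ h

theorem rl_conv (hφ : IsAlgIso X X' φ) {x y : Ω} {x' y' : Ω'} (h : Rl X φ (x, y) (x', y')) :
    Rl X φ (y, x) (y', x') := by
  obtain ⟨r, hr, hxy, hr'⟩ := h
  obtain ⟨q, hq⟩ := rl_left hφ (x, x)
  obtain ⟨a, b⟩ := q
  have := (rl_diag hφ hq).1 rfl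
  subst this
  obtain ⟨z, h1, h2⟩ := rl_ext hφ hq y
  have h3 := (corr_basis hφ hr _ _ h1).1 hxy
  obtain ⟨s, hs, hyx, hs'⟩ := h2
  refine ⟨s, hs, hyx, ?_⟩
  have e := eq_of_mem X' (X'.conv _ (hφ.bijOn.mapsTo hs)) (hφ.bijOn.mapsTo hr)
    (p := (a, z)) hs' h3
  rw [← e] at hr'
  exact hr'

theorem corr_univ : Corr X φ univ univ := fun _ _ _ => by simp

theorem corr_compl {s : Set (Ω × Ω)} {s' : Set (Ω' × Ω')} (h : Corr X φ s s') :
    Corr X φ sᶜ s'ᶜ := fun p q hpq => not_congr (h p q hpq)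

theorem corr_inter {s t : Set (Ω × Ω)} {s' t' : Set (Ω' × Ω')} (h : Corr X φ s s')
    (h2 : Corr X φ t t') : Corr X φ (s ∩ t) (s' ∩ t') :=
  fun p q hpq => and_congr (h p q hpq) (h2 p q hpq)

theorem corr_diag (hφ : IsAlgIso X X' φ) :
    Corr X φ {p | p.1 = p.2} {p | p.1 = p.2} := fun _ _ hpq => rl_diag hφ hpq

theorem corr_conv (hφ : IsAlgIso X X' φ) {s : Set (Ω × Ω)} {s' : Set (Ω' × Ω')}
    (h : Corr X φ s s') : Corr X φ {p | (p.2, p.1) ∈ s} {p | (p.2, p.1) ∈ s'} :=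
  fun _ _ hpq => h _ _ (rl_conv hφ hpq)

/-- Composition of relations. -/
def comp {Ω : Type u} (r s : Set (Ω × Ω)) : Set (Ω × Ω) := {p | ∃ z, (p.1, z) ∈ r ∧ (z, p.2) ∈ s}

theorem corr_comp (hφ : IsAlgIso X X' φ) {r s : Set (Ω × Ω)} {r' s' : Set (Ω' × Ω')}
    (hr : Corr X φ r r') (hs : Corr X φ s s') : Corr X φ (comp r s) (comp r' s') := by
  rintro ⟨x, y⟩ ⟨x', y'⟩ h
  constructor
  · rintro ⟨z, h1, h2⟩
    obtain ⟨z', h3, h4⟩ := rl_ext hφ h z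
    exact ⟨z', (hr _ _ h3).1 h1, (hs _ _ h4).1 h2⟩
  · rintro ⟨z, h1, h2⟩
    obtain ⟨z', h3, h4⟩ := rl_ext' hφ h z
    exact ⟨z', (hr _ _ h3).2 h1, (hs _ _ h4).2 h2⟩

end algiso

theorem corr_id_iff (X : CohCfg Ω) (s : Set (Ω × Ω)) : Corr X id s s ↔ IsRelationOf X s := by
  constructor
  · rintro h t ht ⟨p, hp, hps⟩ q hq
    exact (h p q ⟨t, ht, hp, hq⟩).1 hps
  · rintro h p q ⟨t, ht, hp, hq⟩
    exact ⟨fun h1 => h t ht ⟨p, hp, h1⟩ hq, fun h1 => h t ht ⟨q, hq, h1⟩ hp⟩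

/-! ### Coherent families -/

/-- The closure properties of the set of relations of a coherent configuration. -/
structure CohFam {D : Type u} (F : Set (Set (D × D))) : Prop where
  compl : ∀ s ∈ F, sᶜ ∈ F
  sInter : ∀ G ⊆ F, ⋂₀ G ∈ F
  diag : {p : D × D | p.1 = p.2} ∈ F
  conv : ∀ s ∈ F, {p : D × D | (p.2, p.1) ∈ s} ∈ F
  level : ∀ r ∈ F, ∀ s ∈ F, ∀ n : ℕ, {p : D × D | cnum r s p = n} ∈ F

theorem exists_cfg {D : Type u} [hfin : Finite D] {F : Set (Set (D × D))} (hF : CohFam F) :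
    ∃ Q : CohCfg D, ∀ t, IsRelationOf Q t ↔ t ∈ F := by
  let cell : D × D → Set (D × D) := fun p => {q | ∀ s ∈ F, p ∈ s → q ∈ s}
  have hself : ∀ p, p ∈ cell p := fun p s _ h => h
  have hcell : ∀ p, cell p ∈ F := by
    intro p
    have := hF.sInter {s | s ∈ F ∧ p ∈ s} (fun s hs => hs.1)
    convert this using 1
    ext q
    simp [cell]
  have hsymm : ∀ p q, q ∈ cell p → p ∈ cell q := by
    intro p q h s hs hq
    by_contra hp
    exact h _ (hF.compl s hs) hp hq
  have htrans : ∀ p q, q ∈ cell p → cell q = cell p := by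
    intro p q h
    ext r
    exact ⟨fun h1 => h1 _ (hcell p) h, fun h1 => h1 _ (hcell q) (hsymm p q h)⟩
  have hconv : ∀ p, {q : D × D | (q.2, q.1) ∈ cell p} = cell (p.2, p.1) := by
    intro p
    ext q
    constructor
    · intro h s hs hp
      exact h _ (hF.conv s hs) hp
    · intro h
      exact h _ (hF.conv _ (hcell p)) (hself p)
  refine ⟨⟨Set.range cell, hfin, fun p => ⟨_, ⟨p, rfl⟩, hself p⟩, ?_, ?_, ?_, ?_, ?_⟩, ?_⟩
  · rintro _ ⟨p, rfl⟩ _ ⟨q, rfl⟩ hne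
    by_contra h
    obtain ⟨r, h1, h2⟩ := Set.nonempty_iff_ne_empty.2 h
    exact hne ((htrans _ _ h1).symm.trans (htrans _ _ h2))
  · rintro _ ⟨p, rfl⟩
    exact ⟨p, hself p⟩
  · rintro _ ⟨p, rfl⟩ ⟨q, hq, hd⟩ r hr
    rw [← htrans _ _ hq] at hr
    exact hr _ hF.diag hd
  · rintro _ ⟨p, rfl⟩
    exact ⟨_, (hconv p).symm⟩
  · rintro _ ⟨r, rfl⟩ _ ⟨s, rfl⟩ _ ⟨t, rfl⟩ p hp q hq
    rw [← htrans _ _ hp] at hq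
    exact (hq _ (hF.level _ (hcell r) _ (hcell s) (cnum (cell r) (cell s) p)) rfl).symm
  · intro t
    constructor
    · intro h
      have := hF.compl _ (hF.sInter {s | ∃ p ∈ t, s = (cell p)ᶜ} (by
        rintro _ ⟨p, _, rfl⟩
        exact hF.compl _ (hcell p)))
      convert this using 1
      ext q
      simp only [mem_compl_iff, mem_sInter, mem_setOf_eq, not_forall]
      constructor
      · intro hq
        exact ⟨_, ⟨q, hq, rfl⟩, fun h => h (hself q)⟩
      · rintro ⟨_, ⟨p, hp, rfl⟩, h1⟩
        exact h _ ⟨p, rfl⟩ ⟨p, hself p, hp⟩ (not_not.1 h1)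
    · rintro ht _ ⟨p, rfl⟩ ⟨q, hq, hqt⟩ r hr
      rw [← htrans _ _ hq] at hr
      exact hr t ht hqt

theorem cohFam_rel (X : CohCfg Ω) : CohFam {s | IsRelationOf X s} := by
  have hid := isAlgIso_id X
  constructor
  · intro s hs
    exact (corr_id_iff X _).1 (corr_compl ((corr_id_iff X s).2 hs))
  · intro G hG
    refine (corr_id_iff X _).1 fun p q hpq => ?_
    simp only [mem_sInter]
    exact forall₂_congr fun s hs => (corr_id_iff X s).2 (hG hs) p q hpq
  · exact (corr_id_iff X _).1 (corr_diag hid)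
  · intro s hs
    exact (corr_id_iff X _).1 (corr_conv hid ((corr_id_iff X s).2 hs))
  · intro r hr s hs n
    refine (corr_id_iff X _).1 fun p q hpq => ?_
    have := cnum_corr hid hpq ((corr_id_iff X r).2 hr) ((corr_id_iff X s).2 hs)
    simp [this]

theorem isRel_comp (X : CohCfg Ω) {r s : Set (Ω × Ω)} (hr : IsRelationOf X r)
    (hs : IsRelationOf X s) : IsRelationOf X (comp r s) :=
  (corr_id_iff X _).1 (corr_comp (isAlgIso_id X) ((corr_id_iff X r).2 hr) ((corr_id_iff X s).2 hs))

theorem isRel_basis (X : CohCfg Ω) {s : Set (Ω × Ω)} (hs : s ∈ X.S) : IsRelationOf X s :=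
  (corr_id_iff X _).1 (corr_basis (isAlgIso_id X) hs)

theorem isRel_of_le {X Y : CohCfg Ω} (h : le X Y) {s : Set (Ω × Ω)} (hs : IsRelationOf X s) :
    IsRelationOf Y s := by
  rintro t ht ⟨p, hp, hps⟩ q hq
  obtain ⟨r, hr, hpr⟩ := X.cover p
  exact hs r hr ⟨p, hpr, hps⟩ (h r hr t ht ⟨p, hp, hpr⟩ hq)

theorem basis_of_singleton (X : CohCfg Ω) {p : Ω × Ω} (h : IsRelationOf X {p}) :
    ({p} : Set (Ω × Ω)) ∈ X.S := by
  obtain ⟨t, ht, hp⟩ := X.cover p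
  have := h t ht ⟨p, hp, rfl⟩
  have e : t = {p} := Set.Subset.antisymm this (by simpa using hp)
  exact e ▸ ht

theorem exists_pointExt (X : CohCfg Ω) (α : Ω) : ∃ Y, IsPointExt X α Y := by
  haveI := X.finite
  let F : Set (Set (Ω × Ω)) := {s | ∀ Z : CohCfg Ω, le X Z → ({(α, α)} : Set (Ω × Ω)) ∈ Z.S →
    IsRelationOf Z s}
  have hF : CohFam F :=
    ⟨fun s hs Z h1 h2 => (cohFam_rel Z).compl s (hs Z h1 h2),
     fun G hG Z h1 h2 => (cohFam_rel Z).sInter G fun s hs => hG hs Z h1 h2,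
     fun Z _ _ => (cohFam_rel Z).diag,
     fun s hs Z h1 h2 => (cohFam_rel Z).conv s (hs Z h1 h2),
     fun r hr s hs n Z h1 h2 => (cohFam_rel Z).level r (hr Z h1 h2) s (hs Z h1 h2) n⟩
  obtain ⟨Q, hQ⟩ := exists_cfg hF
  refine ⟨Q, ?_, ?_, ?_⟩
  · intro s hs
    exact (hQ s).2 fun Z h1 _ => h1 s hs
  · exact basis_of_singleton Q ((hQ _).2 fun Z _ h2 => isRel_basis Z h2)
  · intro Z h1 h2 s hs
    exact (hQ s).1 (isRel_basis Q hs) Z h1 h2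

/-- Recognising the set of basis relations. -/
theorem basis_eq {D : Type u} (Q : CohCfg D) (T : Set (Set (D × D)))
    (h1 : ∀ t ∈ T, IsRelationOf Q t) (h2 : ∀ t ∈ T, t.Nonempty) (h3 : ∀ p, ∃ t ∈ T, p ∈ t)
    (h4 : ∀ t ∈ T, ∀ u, IsRelationOf Q u → (t ∩ u).Nonempty → t ⊆ u) : Q.S = T := by
  have key : ∀ p, ∀ s ∈ Q.S, p ∈ s → ∀ t ∈ T, p ∈ t → s = t := fun p s hs hps t ht hpt =>
    Set.Subset.antisymm (h1 t ht s hs ⟨p, hps, hpt⟩) (h4 t ht s (isRel_basis Q hs) ⟨p, hpt, hps⟩)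
  ext s
  constructor
  · intro hs
    obtain ⟨p, hp⟩ := Q.nonemp s hs
    obtain ⟨t, ht, hpt⟩ := h3 p
    rwa [key p s hs hp t ht hpt]
  · intro ht
    obtain ⟨p, hp⟩ := h2 s ht
    obtain ⟨r, hr, hpr⟩ := Q.cover p
    rwa [← key p r hr hpr s ht hp]

/-! ### Lifting relations -/

/-- The lift of a relation along a functional relation `P`. -/
def lift {D : Type u} (P : Ω → D → Prop) (t : Set (D × D)) : Set (Ω × Ω) :=
  {p | ∃ d d', P p.1 d ∧ P p.2 d' ∧ (d, d') ∈ t}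

theorem mem_lift {D : Type u} {P : Ω → D → Prop} (hP : ∀ x d d', P x d → P x d' → d = d')
    {t : Set (D × D)} {x y : Ω} {d d' : D} (hx : P x d) (hy : P y d') :
    (x, y) ∈ lift P t ↔ (d, d') ∈ t := by
  constructor
  · rintro ⟨d1, d2, h1, h2, h3⟩
    rwa [hP _ _ _ hx h1, hP _ _ _ hy h2]
  · intro h
    exact ⟨d, d', hx, hy, h⟩

theorem ncard_fibers {D : Type u} [Finite D] [Finite Ω] {P : Ω → D → Prop}
    (hP : ∀ x d d', P x d → P x d' → d = d') {m : ℕ} (hm : ∀ d, {x | P x d}.ncard = m)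
    (A : Set D) : {x | ∃ d ∈ A, P x d}.ncard = A.ncard * m := by
  induction A, Set.toFinite A using Set.Finite.induction_on with
  | empty => simp
  | @insert a s ha _ ih =>
    rw [Set.ncard_insert_of_notMem ha, add_mul, ← ih, one_mul, ← hm a,
      ← Set.ncard_union_eq _ (Set.toFinite _) (Set.toFinite _)]
    · congr 1
      ext x
      simp only [mem_insert_iff, mem_setOf_eq, mem_union]
      constructor
      · rintro ⟨d, rfl | hd, h⟩
        · exact Or.inr h
        · exact Or.inl ⟨d, hd, h⟩
      · rintro (⟨d, hd, h⟩ | h)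
        · exact ⟨d, Or.inr hd, h⟩
        · exact ⟨a, Or.inl rfl, h⟩
    · rw [Set.disjoint_left]
      rintro x ⟨d, hd, h⟩ h2
      exact ha (hP _ _ _ h h2 ▸ hd)

theorem cnum_lift {D : Type u} [Finite D] [Finite Ω] {P : Ω → D → Prop}
    (hP : ∀ x d d', P x d → P x d' → d = d') {m : ℕ} (hm : ∀ d, {x | P x d}.ncard = m)
    (r s : Set (D × D)) {x y : Ω} {d d' : D} (hx : P x d) (hy : P y d') :
    cnum (lift P r) (lift P s) (x, y) = cnum r s (d, d') * m := by
  unfold cnum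
  rw [← ncard_fibers hP hm]
  congr 1
  ext z
  constructor
  · rintro ⟨⟨d1, d2, h1, h2, h3⟩, h4⟩
    refine ⟨d2, ⟨?_, ?_⟩, h2⟩
    · rwa [hP _ _ _ hx h1]
    · exact (mem_lift hP h2 hy).1 h4
  · rintro ⟨d2, ⟨h1, h2⟩, h3⟩
    exact ⟨(mem_lift hP hx h3).2 h1, (mem_lift hP h3 hy).2 h2⟩

theorem cohFam_lift {D : Type u} [Finite D] {X : CohCfg Ω} {X' : CohCfg Ω'}
    {φ : Set (Ω × Ω) → Set (Ω' × Ω')} (hφ : IsAlgIso X X' φ)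
    {P : Ω → D → Prop} {P' : Ω' → D → Prop}
    (hP : ∀ x d d', P x d → P x d' → d = d') (hP' : ∀ x d d', P' x d → P' x d' → d = d')
    {m : ℕ} (hm0 : 0 < m) (hm : ∀ d, {x | P x d}.ncard = m) (hm' : ∀ d, {x | P' x d}.ncard = m)
    (hU : Corr X φ (lift P univ) (lift P' univ))
    (hD : Corr X φ (lift P {p | p.1 = p.2}) (lift P' {p | p.1 = p.2})) :
    CohFam {t | Corr X φ (lift P t) (lift P' t)} := by
  haveI := X.finite
  haveI := X'.finite
  -- all conditions may be tested on pairs that are over `D`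
  have key : ∀ t : Set (D × D), (∀ x y x' y', Rl X φ (x, y) (x', y') → ∀ d1 d2 d1' d2',
      P x d1 → P y d2 → P' x' d1' → P' y' d2' → ((d1, d2) ∈ t ↔ (d1', d2') ∈ t)) →
      Corr X φ (lift P t) (lift P' t) := by
    rintro t ht ⟨x, y⟩ ⟨x', y'⟩ h
    constructor
    · rintro ⟨d1, d2, h1, h2, h3⟩
      obtain ⟨d1', d2', h1', h2', -⟩ := (hU _ _ h).1 ⟨d1, d2, h1, h2, trivial⟩
      exact ⟨d1', d2', h1', h2', (ht _ _ _ _ h _ _ _ _ h1 h2 h1' h2').1 h3⟩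
    · rintro ⟨d1, d2, h1, h2, h3⟩
      obtain ⟨d1', d2', h1', h2', -⟩ := (hU _ _ h).2 ⟨d1, d2, h1, h2, trivial⟩
      exact ⟨d1', d2', h1', h2', (ht _ _ _ _ h _ _ _ _ h1' h2' h1 h2).2 h3⟩
  have key2 : ∀ t : Set (D × D), Corr X φ (lift P t) (lift P' t) →
      ∀ x y x' y', Rl X φ (x, y) (x', y') → ∀ d1 d2 d1' d2',
      P x d1 → P y d2 → P' x' d1' → P' y' d2' → ((d1, d2) ∈ t ↔ (d1', d2') ∈ t) := by
    intro t ht x y x' y' h d1 d2 d1' d2' h1 h2 h1' h2'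
    rw [← mem_lift hP h1 h2, ← mem_lift hP' h1' h2']
    exact ht _ _ h
  constructor
  · intro s hs
    refine key _ fun x y x' y' h d1 d2 d1' d2' h1 h2 h1' h2' => ?_
    exact not_congr (key2 s hs x y x' y' h d1 d2 d1' d2' h1 h2 h1' h2')
  · intro G hG
    refine key _ fun x y x' y' h d1 d2 d1' d2' h1 h2 h1' h2' => ?_
    simp only [mem_sInter]
    exact forall₂_congr fun s hs => key2 s (hG hs) x y x' y' h d1 d2 d1' d2' h1 h2 h1' h2'
  · exact hD
  · intro s hs
    refine key _ fun x y x' y' h d1 d2 d1' d2' h1 h2 h1' h2' => ?_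
    exact key2 s hs y x y' x' (rl_conv hφ h) d2 d1 d2' d1' h2 h1 h2' h1'
  · intro r hr s hs n
    refine key _ fun x y x' y' h d1 d2 d1' d2' h1 h2 h1' h2' => ?_
    have e := cnum_corr hφ h hr hs
    rw [cnum_lift hP hm r s h1 h2, cnum_lift hP' hm' r s h1' h2'] at e
    have e2 := Nat.eq_of_mul_eq_mul_right hm0 e
    simp [e2]

/-! ### Restrictions, quotients and regular points -/

theorem exists_restriction {D : Type u} (Z : CohCfg D) (A : Set D)
    (h : IsRelationOf Z (A ×ˢ A)) : ∃ W : CohCfg ↥A, IsRestrictionCfg Z A W := by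
  have := Z.finite
  let P : D → ↥A → Prop := fun x a => x = a.1
  have hP : ∀ x d d', P x d → P x d' → d = d' := fun x d d' h1 h2 => Subtype.ext (h1.symm.trans h2)
  have hm : ∀ d, {x | P x d}.ncard = 1 := fun d => by simp [P]
  have eU : lift P univ = A ×ˢ A := by
    ext ⟨x, y⟩
    constructor
    · rintro ⟨d, d', h1, h2, -⟩
      exact ⟨h1 ▸ d.2, h2 ▸ d'.2⟩
    · rintro ⟨h1, h2⟩
      exact ⟨⟨x, h1⟩, ⟨y, h2⟩, rfl, rfl, trivial⟩
  have eL : ∀ s, lift P (restRel A s) = s ∩ A ×ˢ A := by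
    intro s
    ext ⟨x, y⟩
    constructor
    · rintro ⟨d, d', h1, h2, h3⟩
      simp only [P] at h1 h2
      subst h1 h2
      exact ⟨h3, d.2, d'.2⟩
    · rintro ⟨h3, h1, h2⟩
      exact ⟨⟨x, h1⟩, ⟨y, h2⟩, rfl, rfl, h3⟩
  have eD : lift P {p | p.1 = p.2} = {p | p.1 = p.2} ∩ A ×ˢ A := by
    rw [← eL]
    congr 1
    ext ⟨x, y⟩
    simp [restRel, Subtype.ext_iff]
  have hid := isAlgIso_id Z
  have hA := (corr_id_iff Z _).2 h
  have hF := cohFam_lift hid hP hP one_pos hm hm (by rw [eU]; exact hA)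
    (by rw [eD]; exact corr_inter (corr_diag hid) hA)
  obtain ⟨W, hW⟩ := exists_cfg hF
  refine ⟨W, basis_eq W _ ?_ ?_ ?_ ?_⟩
  · rintro _ ⟨s, hs, rfl, -⟩
    refine (hW _).2 ?_
    change Corr Z id (lift P (restRel A s)) (lift P (restRel A s))
    rw [eL]
    exact corr_inter (corr_basis hid hs) hA
  · rintro _ ⟨s, hs, rfl, h⟩
    exact h
  · rintro ⟨x, y⟩
    obtain ⟨s, hs, hxy⟩ := Z.cover (x.1, y.1)
    exact ⟨_, ⟨s, hs, rfl, ⟨(x, y), hxy⟩⟩, hxy⟩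
  · rintro _ ⟨s, hs, rfl, -⟩ u hu ⟨⟨x, y⟩, h1, h2⟩ ⟨x', y'⟩ h3
    have := ((hW u).1 hu (x.1, y.1) (x'.1, y'.1) ⟨s, hs, h1, h3⟩).1 ⟨x, y, rfl, rfl, h2⟩
    exact (mem_lift hP rfl rfl).1 this

section quot
variable {e : Set (Ω × Ω)}

theorem par_mem_eClass {X : CohCfg Ω} (he : IsParabolic X e) (a : Ω) : a ∈ eClass e a := he.2.1 a

theorem par_symm {X : CohCfg Ω} (he : IsParabolic X e) {a b : Ω} (h : (a, b) ∈ e) : (b, a) ∈ e :=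
  he.2.2.1 _ h

theorem par_trans {X : CohCfg Ω} (he : IsParabolic X e) {a b c : Ω} (h : (a, b) ∈ e)
    (h' : (b, c) ∈ e) : (a, c) ∈ e := he.2.2.2 _ _ _ h h'

theorem eClass_eq {X : CohCfg Ω} (he : IsParabolic X e) {a b : Ω} (h : (a, b) ∈ e) :
    eClass e a = eClass e b := by
  ext c
  exact ⟨fun h1 => par_trans he (par_symm he h) h1, fun h1 => par_trans he h h1⟩

/-- If `x` lies in a class of the section then the class is that of `x`. -/
theorem sec_eq {X : CohCfg Ω} (he : IsParabolic X e) {Δ : Set Ω} (G : Sec Δ e) {x : Ω}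
    (h : x ∈ G.1) : G.1 = eClass e x := by
  obtain ⟨_, a, ha, rfl⟩ := G
  exact eClass_eq he h

/-- The class of a point in the full quotient. -/
def cl (e : Set (Ω × Ω)) (a : Ω) : Sec (univ : Set Ω) e := ⟨eClass e a, a, mem_univ a, rfl⟩

theorem sec_mem_mk {a b : Ω} : b ∈ (cl e a).1 ↔ (a, b) ∈ e := Iff.rfl

theorem sec_eq_mk {X : CohCfg Ω} (he : IsParabolic X e) (G : Sec (univ : Set Ω) e) {x : Ω}
    (h : x ∈ G.1) : G = cl e x := Subtype.ext (sec_eq he G h)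

theorem sec_mk_eq {X : CohCfg Ω} (he : IsParabolic X e) {a b : Ω} (h : (a, b) ∈ e) :
    cl e a = cl e b := Subtype.ext (eClass_eq he h)

theorem sec_mk_surj (G : Sec (univ : Set Ω) e) : ∃ a, G = cl e a := by
  obtain ⟨_, a, ha, rfl⟩ := G
  exact ⟨a, rfl⟩

theorem lift_secRel {X : CohCfg Ω} (he : IsParabolic X e) (s : Set (Ω × Ω)) :
    lift (fun x (G : Sec (univ : Set Ω) e) => x ∈ G.1) (secRel univ e s) =
      comp (comp e s) e := by
  ext ⟨x, y⟩
  constructor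
  · rintro ⟨G, G', h1, h2, a, ha, b, hb, hab⟩
    have e1 := sec_eq he G h1
    have e2 := sec_eq he G' hb
    simp only at h2 ha
    rw [e1] at ha
    rw [e2] at h2
    exact ⟨b, ⟨a, ha, hab⟩, h2⟩
  · rintro ⟨b, ⟨a, ha, hab⟩, hb⟩
    exact ⟨cl e x, cl e y, par_mem_eClass he x, par_mem_eClass he y, a, ha, b, par_symm he hb, hab⟩

theorem lift_sec_univ {X : CohCfg Ω} (he : IsParabolic X e) :
    lift (fun x (G : Sec (univ : Set Ω) e) => x ∈ G.1) univ = univ := by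
  ext ⟨x, y⟩
  simp only [mem_univ, iff_true]
  exact ⟨cl e x, cl e y, par_mem_eClass he x, par_mem_eClass he y, trivial⟩

theorem lift_sec_diag {X : CohCfg Ω} (he : IsParabolic X e) :
    lift (fun x (G : Sec (univ : Set Ω) e) => x ∈ G.1) {p | p.1 = p.2} = e := by
  ext ⟨x, y⟩
  constructor
  · rintro ⟨G, G', h1, h2, h3⟩
    have h3 : G = G' := h3
    subst h3
    have e1 := sec_eq he G h1
    simp only at h2
    rw [e1] at h2
    exact h2
  · intro h
    exact ⟨cl e x, cl e x, par_mem_eClass he x, h, rfl⟩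

theorem exists_quotient (Z : CohCfg Ω) (he : IsParabolic Z e) {m : ℕ} (hm0 : 0 < m)
    (hm : ∀ a, (eClass e a).ncard = m) :
    ∃ W : CohCfg (Sec (univ : Set Ω) e), IsSectionCfg Z univ e W := by
  have := Z.finite
  let P : Ω → Sec (univ : Set Ω) e → Prop := fun x G => x ∈ G.1
  have hP : ∀ x d d', P x d → P x d' → d = d' := fun x d d' h1 h2 => by
    rw [sec_eq_mk he d h1, sec_eq_mk he d' h2]
  have hmP : ∀ d, {x | P x d}.ncard = m := fun d => by
    obtain ⟨a, rfl⟩ := sec_mk_surj d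
    exact hm a
  have hid := isAlgIso_id Z
  have hE := (corr_id_iff Z _).2 he.1
  have hF := cohFam_lift hid hP hP hm0 hmP hmP (by rw [lift_sec_univ he]; exact corr_univ)
    (by rw [lift_sec_diag he]; exact hE)
  obtain ⟨W, hW⟩ := exists_cfg hF
  refine ⟨W, basis_eq W _ ?_ ?_ ?_ ?_⟩
  · rintro _ ⟨s, hs, rfl, -⟩
    refine (hW _).2 ?_
    change Corr Z id (lift P (secRel univ e s)) (lift P (secRel univ e s))
    rw [lift_secRel he]
    exact corr_comp hid (corr_comp hid hE (corr_basis hid hs)) hE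
  · rintro _ ⟨s, hs, rfl, h⟩
    exact h
  · rintro ⟨G, G'⟩
    obtain ⟨a, rfl⟩ := sec_mk_surj G
    obtain ⟨b, rfl⟩ := sec_mk_surj G'
    obtain ⟨s, hs, hxy⟩ := Z.cover (a, b)
    have : (cl e a, cl e b) ∈ secRel univ e s :=
      ⟨a, par_mem_eClass he a, b, par_mem_eClass he b, hxy⟩
    exact ⟨_, ⟨s, hs, rfl, ⟨_, this⟩⟩, this⟩
  · rintro _ ⟨s, hs, rfl, -⟩ u hu ⟨⟨G, G'⟩, ⟨a, ha, b, hb, hab⟩, h2⟩ ⟨H, H'⟩ ⟨c, hc, d, hd, hcd⟩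
    have := ((hW u).1 hu (a, b) (c, d) ⟨s, hs, hab, hcd⟩).1 ⟨G, G', ha, hb, h2⟩
    exact (mem_lift hP hc hd).1 this

end quot

theorem eq_of_ncard_le_one {D : Type u} [Finite D] {A : Set D} (h : A.ncard ≤ 1) {a b : D}
    (ha : a ∈ A) (hb : b ∈ A) : a = b :=
  (Set.ncard_le_one (Set.toFinite A)).1 h a ha b hb

/-- The regular point of the quotient. -/
theorem reg0 {X : CohCfg Ω} {e0 e1 : Set (Ω × Ω)} (he0 : IsParabolic X e0)
    (he1 : IsParabolic X e1) (h01 : e0 ⊆ e1) (α : Ω)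
    (Y0 : CohCfg (Sec (univ : Set Ω) e0)) (hY0 : IsSectionCfg X univ e0 Y0)
    (hpr0 : ∀ Z0 : CohCfg (Sec (univ : Set Ω) e0),
       IsPointExt Y0 (cl e0 α) Z0 →
       ∀ W : CohCfg ↥{G : Sec (univ : Set Ω) e0 | (G.1 ∩ eClass e1 α).Nonempty},
         IsRestrictionCfg Z0 {G | (G.1 ∩ eClass e1 α).Nonempty} W → PartlyRegular W) :
    ∃ Z0, IsPointExt Y0 (cl e0 α) Z0 ∧ ∃ b ∈ eClass e1 α, ∀ c ∈ eClass e1 α,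
      ∃ t, IsRelationOf Z0 t ∧ (cl e0 b, cl e0 c) ∈ t ∧
        ∀ γ, (cl e0 b, γ) ∈ t → γ = cl e0 c := by
  obtain ⟨Z0, hZ0⟩ := exists_pointExt Y0 (cl e0 α)
  have := Y0.finite
  refine ⟨Z0, hZ0, ?_⟩
  set A : Set (Sec (univ : Set Ω) e0) := {G | (G.1 ∩ eClass e1 α).Nonempty} with hA
  let E1 : Set (Sec (univ : Set Ω) e0 × Sec (univ : Set Ω) e0) := secRel univ e0 e1
  have hE1 : ∀ a b, (cl e0 a, cl e0 b) ∈ E1 ↔ (a, b) ∈ e1 := by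
    intro a b
    constructor
    · rintro ⟨x, hx, y, hy, hxy⟩
      exact par_trans he1 (par_trans he1 (h01 hx) hxy) (par_symm he1 (h01 hy))
    · intro h
      exact ⟨a, par_mem_eClass he0 a, b, par_mem_eClass he0 b, h⟩
  have hAm : ∀ a, cl e0 a ∈ A ↔ (α, a) ∈ e1 := by
    intro a
    constructor
    · rintro ⟨x, hx, hx1⟩
      exact par_trans he1 hx1 (par_symm he1 (h01 hx))
    · intro h
      exact ⟨a, par_mem_eClass he0 a, h⟩
  have hE1r : IsRelationOf Z0 E1 := by
    refine isRel_of_le hZ0.1 ?_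
    intro t ht
    rw [hY0] at ht
    obtain ⟨s, hs, rfl, -⟩ := ht
    rintro ⟨⟨G, G'⟩, ⟨a, ha, b, hb, hab⟩, h2⟩
    rw [sec_eq_mk he0 G ha, sec_eq_mk he0 G' hb, hE1] at h2
    have := he1.1 s hs ⟨_, hab, h2⟩
    rintro ⟨H, H'⟩ ⟨c, hc, d, hd, hcd⟩
    exact ⟨c, hc, d, hd, this hcd⟩
  have hAr : IsRelationOf Z0 (A ×ˢ A) := by
    have := isRel_comp Z0 (isRel_comp Z0 hE1r (isRel_basis Z0 hZ0.2.1)) hE1r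
    convert this using 1
    ext ⟨G, G'⟩
    obtain ⟨a, rfl⟩ := sec_mk_surj G
    obtain ⟨b, rfl⟩ := sec_mk_surj G'
    constructor
    · rintro ⟨h1, h2⟩
      exact ⟨cl e0 α, ⟨cl e0 α, (hE1 _ _).2 (par_symm he1 ((hAm a).1 h1)), rfl⟩,
        (hE1 _ _).2 ((hAm b).1 h2)⟩
    · rintro ⟨H, ⟨H', h1, h2⟩, h3⟩
      obtain ⟨rfl, rfl⟩ := Prod.ext_iff.1 h2
      exact ⟨(hAm a).2 (par_symm he1 ((hE1 _ _).1 h1)), (hAm b).2 ((hE1 _ _).1 h3)⟩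
  obtain ⟨W, hW⟩ := exists_restriction Z0 A hAr
  obtain ⟨⟨β, hβ⟩, hreg⟩ := hpr0 Z0 hZ0 W hW
  obtain ⟨b, rfl⟩ := sec_mk_surj β
  have hb := (hAm b).1 hβ
  refine ⟨b, hb, fun c hc => ?_⟩
  have hcA := (hAm c).2 hc
  obtain ⟨s, hs, hbc⟩ := Z0.cover (cl e0 b, cl e0 c)
  have hin : ∀ γ, (cl e0 b, γ) ∈ s → γ ∈ A := fun γ h =>
    (hAr s hs ⟨_, hbc, hβ, hcA⟩ h).2
  refine ⟨s, isRel_basis Z0 hs, hbc, fun γ hγ => ?_⟩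
  have hs' : restRel A s ∈ W.S := by
    rw [hW]
    exact ⟨s, hs, rfl, ⟨(⟨_, hβ⟩, ⟨_, hcA⟩), hbc⟩⟩
  have := eq_of_ncard_le_one (hreg _ hs') (a := ⟨γ, hin γ hγ⟩) (b := ⟨cl e0 c, hcA⟩) hγ hbc
  exact congrArg Subtype.val this

/-- The regular point of the restriction. -/
theorem reg1 {X : CohCfg Ω} {e0 e1 : Set (Ω × Ω)} (he0 : IsParabolic X e0)
    (he1 : IsParabolic X e1) (h01 : e0 ⊆ e1) (α : Ω)
    {m : ℕ} (hm0 : 0 < m) (hm : ∀ a, (eClass e0 a).ncard = m)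
    (X1 : CohCfg ↥(eClass e1 α)) (hX1 : IsRestrictionCfg X (eClass e1 α) X1)
    (hpr1 : ∀ Z1 : CohCfg ↥(eClass e1 α),
       IsPointExt X1 (⟨α, he1.2.1 α⟩ : ↥(eClass e1 α)) Z1 →
       ∀ W : CohCfg (Sec (univ : Set ↥(eClass e1 α)) (restRel (eClass e1 α) e0)),
         IsSectionCfg Z1 univ (restRel (eClass e1 α) e0) W → PartlyRegular W) :
    ∃ Z1, IsPointExt X1 (⟨α, he1.2.1 α⟩ : ↥(eClass e1 α)) Z1 ∧ ∃ b : ↥(eClass e1 α),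
      ∀ c : ↥(eClass e1 α), ∃ t, IsRelationOf Z1 t ∧ (b, c) ∈ t ∧
        ∀ x y : ↥(eClass e1 α), (x, y) ∈ t → (b.1, x.1) ∈ e0 → (c.1, y.1) ∈ e0 := by
  obtain ⟨Z1, hZ1⟩ := exists_pointExt X1 (⟨α, he1.2.1 α⟩ : ↥(eClass e1 α))
  have := X.finite
  refine ⟨Z1, hZ1, ?_⟩
  set E := restRel (eClass e1 α) e0 with hE
  have hEr : IsRelationOf Z1 E := by
    refine isRel_of_le hZ1.1 ?_
    intro t ht
    rw [hX1] at ht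
    obtain ⟨s, hs, rfl, -⟩ := ht
    rintro ⟨⟨x, y⟩, h1, h2⟩ ⟨z, w⟩ h3
    exact he0.1 s hs ⟨_, h1, h2⟩ h3
  have hEp : IsParabolic Z1 E := ⟨hEr, fun a => he0.2.1 a.1, fun p hp => he0.2.2.1 _ hp,
    fun a b c h1 h2 => he0.2.2.2 _ _ _ h1 h2⟩
  have hmE : ∀ a, (eClass E a).ncard = m := by
    intro a
    rw [← hm a.1, ← Set.ncard_image_of_injective _ Subtype.val_injective]
    congr 1
    ext x
    constructor
    · rintro ⟨y, hy, rfl⟩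
      exact hy
    · intro hx
      exact ⟨⟨x, par_trans he1 a.2 (h01 hx)⟩, hx, rfl⟩
  obtain ⟨W, hW⟩ := exists_quotient Z1 hEp hm0 hmE
  obtain ⟨β, hreg⟩ := hpr1 Z1 hZ1 W hW
  obtain ⟨b, rfl⟩ := sec_mk_surj β
  refine ⟨b, fun c => ?_⟩
  obtain ⟨s, hs, hbc⟩ := Z1.cover (b, c)
  have hm1 : (cl E b, cl E c) ∈ secRel univ E s :=
    ⟨b, par_mem_eClass hEp b, c, par_mem_eClass hEp c, hbc⟩
  have hs' : secRel univ E s ∈ W.S := by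
    rw [hW]
    exact ⟨s, hs, rfl, _, hm1⟩
  refine ⟨comp (comp E s) E, isRel_comp Z1 (isRel_comp Z1 hEr (isRel_basis Z1 hs)) hEr,
    ⟨c, ⟨b, hEp.2.1 b, hbc⟩, hEp.2.1 c⟩, ?_⟩
  rintro x y ⟨v, ⟨w, h1, h2⟩, h3⟩ hx
  have hm2 : (cl E b, cl E v) ∈ secRel univ E s :=
    ⟨w, par_trans hEp (b := x) hx h1, v, par_mem_eClass hEp v, h2⟩
  have : cl E c = cl E v := eq_of_ncard_le_one (hreg _ hs') hm1 hm2
  have hv : v ∈ (cl E c).1 := this ▸ par_mem_eClass hEp v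
  exact par_trans hEp hv h3

theorem rel_pointExt {D : Type u} {X : CohCfg Ω} {X' : CohCfg Ω'}
    {φ : Set (Ω × Ω) → Set (Ω' × Ω')} (hφ : IsAlgIso X X' φ)
    {P : Ω → D → Prop} {P' : Ω' → D → Prop}
    (hP : ∀ x d d', P x d → P x d' → d = d') (hP' : ∀ x d d', P' x d → P' x d' → d = d')
    {m : ℕ} (hm0 : 0 < m) (hm : ∀ d, {x | P x d}.ncard = m) (hm' : ∀ d, {x | P' x d}.ncard = m)
    (hU : Corr X φ (lift P univ) (lift P' univ))
    (hD : Corr X φ (lift P {p | p.1 = p.2}) (lift P' {p | p.1 = p.2}))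
    (Y Z : CohCfg D) (a : D) (hZ : IsPointExt Y a Z)
    (hY : ∀ t ∈ Y.S, Corr X φ (lift P t) (lift P' t))
    (ha : Corr X φ (lift P {(a, a)}) (lift P' {(a, a)})) :
    ∀ t, IsRelationOf Z t → Corr X φ (lift P t) (lift P' t) := by
  have := Y.finite
  obtain ⟨Q, hQ⟩ := exists_cfg (cohFam_lift hφ hP hP' hm0 hm hm' hU hD)
  have hle : le Z Q := hZ.2.2 Q (fun s hs => (hQ s).2 (hY s hs))
    (basis_of_singleton Q ((hQ _).2 ha))
  intro t ht
  exact (hQ t).1 (isRel_of_le hle ht)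

theorem exists_iso {Y : CohCfg Ω} {Y' : CohCfg Ω'} {φ : Set (Ω × Ω) → Set (Ω' × Ω')}
    (hsch : Schurian Y) (hne : (IsoSet Y Y' φ).Nonempty) {t : Set (Ω × Ω)} (ht : t ∈ Y.S)
    {x y : Ω} {x' y' : Ω'} (hp : (x, y) ∈ t) (hq : (x', y') ∈ φ t) :
    ∃ g ∈ IsoSet Y Y' φ, g x = x' ∧ g y = y' := by
  obtain ⟨g0, hg0, hg⟩ := hne
  rw [← hg t ht] at hq
  obtain ⟨⟨a, b⟩, hab, he⟩ := hq
  obtain ⟨rfl, rfl⟩ := Prod.ext_iff.1 he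
  obtain ⟨f, ⟨hf, hft⟩, hfe⟩ := hsch t ht _ hp _ hab
  obtain ⟨h1, h2⟩ := Prod.ext_iff.1 hfe
  simp only at h1 h2
  refine ⟨g0 ∘ f, ⟨hg0.comp hf, fun s hs => ?_⟩, by simp [h1], by simp [h2]⟩
  rw [← hg s hs]
  conv_rhs => rw [← hft s hs]
  unfold relImage
  rw [Set.image_image]
  rfl

theorem mem_relImage {f : Ω → Ω'} (hf : Function.Injective f) {s : Set (Ω × Ω)} {x y : Ω} :
    (f x, f y) ∈ relImage f s ↔ (x, y) ∈ s := by
  constructor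
  · rintro ⟨⟨a, b⟩, h, he⟩
    obtain ⟨h1, h2⟩ := Prod.ext_iff.1 he
    rwa [← hf h1, ← hf h2]
  · intro h
    exact ⟨_, h, rfl⟩

theorem lift_map {D D' : Type u} (P : Ω → D' → Prop) (g : D → D') (hg : Function.Bijective g)
    (t : Set (D × D)) : lift (fun x d => P x (g d)) t = lift P (relImage g t) := by
  ext ⟨x, y⟩
  constructor
  · rintro ⟨d, d', h1, h2, h3⟩
    exact ⟨g d, g d', h1, h2, _, h3, rfl⟩
  · rintro ⟨d, d', h1, h2, h3⟩
    obtain ⟨a, rfl⟩ := hg.2 d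
    obtain ⟨b, rfl⟩ := hg.2 d'
    exact ⟨a, b, h1, h2, (mem_relImage hg.1).1 h3⟩

theorem relImage_univ {D D' : Type u} {g : D → D'} (hg : Function.Bijective g) :
    relImage g univ = univ := by
  ext ⟨x, y⟩
  obtain ⟨a, rfl⟩ := hg.2 x
  obtain ⟨b, rfl⟩ := hg.2 y
  simp [mem_relImage hg.1]

theorem relImage_diag {D D' : Type u} {g : D → D'} (hg : Function.Bijective g) :
    relImage g {p | p.1 = p.2} = {p | p.1 = p.2} := by
  ext ⟨x, y⟩
  obtain ⟨a, rfl⟩ := hg.2 x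
  obtain ⟨b, rfl⟩ := hg.2 y
  rw [mem_relImage hg.1]
  exact hg.1.eq_iff.symm

theorem relImage_single {D D' : Type u} (g : D → D') (a : D) :
    relImage g {(a, a)} = {(g a, g a)} := by
  simp [relImage]

theorem secRel_single {X : CohCfg Ω} {e : Set (Ω × Ω)} (he : IsParabolic X e) (α : Ω) :
    secRel univ e {(α, α)} = {(cl e α, cl e α)} := by
  ext ⟨G, G'⟩
  constructor
  · rintro ⟨a, ha, b, hb, hab⟩
    simp only [mem_singleton_iff, Prod.mk.injEq] at hab
    obtain ⟨rfl, rfl⟩ := hab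
    rw [sec_eq_mk he G ha, sec_eq_mk he G' hb]
    rfl
  · intro h
    obtain ⟨rfl, rfl⟩ := Prod.ext_iff.1 h
    exact ⟨α, par_mem_eClass he α, α, par_mem_eClass he α, rfl⟩

section star
variable {X : CohCfg Ω} {X' : CohCfg Ω'} {φ : Set (Ω × Ω) → Set (Ω' × Ω')}
  {Z : CohCfg Ω} {Z' : CohCfg Ω'} {ψ : Set (Ω × Ω) → Set (Ω' × Ω')}

theorem star0 (hψ : IsAlgIso Z Z' ψ) {e0 : Set (Ω × Ω)} {e0' : Set (Ω' × Ω')}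
    (he0 : IsParabolic X e0) (he0' : IsParabolic X' e0') {m : ℕ} (hm0 : 0 < m)
    (hm : ∀ a, (eClass e0 a).ncard = m) (hm' : ∀ a, (eClass e0' a).ncard = m)
    (hce : Corr Z ψ e0 e0') (hcs : ∀ s ∈ X.S, Corr Z ψ s (φ s)) {α : Ω} {α' : Ω'}
    (hα : Corr Z ψ {(α, α)} {(α', α')})
    {Y0 : CohCfg (Sec (univ : Set Ω) e0)} (hY0 : IsSectionCfg X univ e0 Y0)
    {Y0' : CohCfg (Sec (univ : Set Ω') e0')}
    {φ0 : Set (Sec (univ : Set Ω) e0 × Sec (univ : Set Ω) e0) →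
          Set (Sec (univ : Set Ω') e0' × Sec (univ : Set Ω') e0')}
    (hφ0 : ∀ s ∈ X.S, φ0 (secRel univ e0 s) = secRel univ e0' (φ s))
    {g : Sec (univ : Set Ω) e0 → Sec (univ : Set Ω') e0'} (hg : g ∈ IsoSet Y0 Y0' φ0)
    (hgα : g (cl e0 α) = cl e0' α') {Z0 : CohCfg (Sec (univ : Set Ω) e0)}
    (hZ0 : IsPointExt Y0 (cl e0 α) Z0) (t) (ht : IsRelationOf Z0 t) :
    Corr Z ψ (lift (fun x (G : Sec (univ : Set Ω) e0) => x ∈ G.1) t)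
      (lift (fun x' (G : Sec (univ : Set Ω) e0) => x' ∈ (g G).1) t) := by
  obtain ⟨hgb, hg⟩ := hg
  have hP' : ∀ x (d d' : Sec (univ : Set Ω') e0'), x ∈ d.1 → x ∈ d'.1 → d = d' :=
    fun x d d' h1 h2 => by rw [sec_eq_mk he0' d h1, sec_eq_mk he0' d' h2]
  have hlm := fun t => lift_map (fun x' (G : Sec (univ : Set Ω') e0') => x' ∈ G.1) g hgb t
  refine rel_pointExt hψ (m := m) ?_ ?_ hm0 ?_ ?_ ?_ ?_ Y0 Z0 _ hZ0 ?_ ?_ t ht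
  · intro x d d' h1 h2
    rw [sec_eq_mk he0 d h1, sec_eq_mk he0 d' h2]
  · intro x d d' h1 h2
    exact hgb.1 (hP' x _ _ h1 h2)
  · intro d
    obtain ⟨a, rfl⟩ := sec_mk_surj d
    exact hm a
  · intro d
    obtain ⟨a, ha⟩ := sec_mk_surj (g d)
    simp only [ha]
    exact hm' a
  · rw [hlm, relImage_univ hgb, lift_sec_univ he0, lift_sec_univ he0']
    exact corr_univ
  · rw [hlm, relImage_diag hgb, lift_sec_diag he0, lift_sec_diag he0']
    exact hce
  · intro t ht
    rw [hlm, hg t ht]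
    rw [hY0] at ht
    obtain ⟨s, hs, rfl, -⟩ := ht
    rw [hφ0 s hs, lift_secRel he0, lift_secRel he0']
    exact corr_comp hψ (corr_comp hψ hce (hcs s hs)) hce
  · rw [hlm, relImage_single, hgα, ← secRel_single he0, ← secRel_single he0', lift_secRel he0,
      lift_secRel he0']
    exact corr_comp hψ (corr_comp hψ hce hα) hce

theorem lift_val_rest (A : Set Ω) (s : Set (Ω × Ω)) :
    lift (fun x (a : ↥A) => x = a.1) (restRel A s) = s ∩ A ×ˢ A := by
  ext ⟨x, y⟩
  constructor
  · rintro ⟨d, d', h1, h2, h3⟩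
    simp only at h1 h2
    subst h1 h2
    exact ⟨h3, d.2, d'.2⟩
  · rintro ⟨h3, h1, h2⟩
    exact ⟨⟨x, h1⟩, ⟨y, h2⟩, rfl, rfl, h3⟩

theorem lift_val_univ (A : Set Ω) :
    lift (fun x (a : ↥A) => x = a.1) univ = A ×ˢ A := by
  have := lift_val_rest A univ
  rwa [univ_inter] at this

theorem lift_val_diag (A : Set Ω) :
    lift (fun x (a : ↥A) => x = a.1) {p | p.1 = p.2} = {p | p.1 = p.2} ∩ A ×ˢ A := by
  rw [← lift_val_rest]
  congr 1
  ext ⟨x, y⟩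
  simp [restRel, Subtype.ext_iff]

theorem lift_val_single (A : Set Ω) (a : ↥A) :
    lift (fun x (a : ↥A) => x = a.1) {(a, a)} = {(a.1, a.1)} := by
  ext ⟨x, y⟩
  constructor
  · rintro ⟨d, d', h1, h2, h3⟩
    simp only [mem_singleton_iff, Prod.mk.injEq] at h3
    obtain ⟨rfl, rfl⟩ := h3
    simp only at h1 h2
    rw [h1, h2]
    rfl
  · intro h
    obtain ⟨h1, h2⟩ := Prod.ext_iff.1 h
    exact ⟨a, a, h1, h2, rfl⟩

theorem prod_eq_comp {e1 : Set (Ω × Ω)} (he1 : IsParabolic X e1) (α : Ω) :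
    eClass e1 α ×ˢ eClass e1 α = comp (comp e1 {(α, α)}) e1 := by
  ext ⟨x, y⟩
  constructor
  · rintro ⟨h1, h2⟩
    exact ⟨α, ⟨α, par_symm he1 h1, rfl⟩, h2⟩
  · rintro ⟨z, ⟨w, h1, h2⟩, h3⟩
    simp only [mem_singleton_iff, Prod.mk.injEq] at h2
    obtain ⟨rfl, rfl⟩ := h2
    exact ⟨par_symm he1 h1, h3⟩

theorem star1 (hψ : IsAlgIso Z Z' ψ) {e1 : Set (Ω × Ω)} {e1' : Set (Ω' × Ω')}
    (he1 : IsParabolic X e1) (he1' : IsParabolic X' e1')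
    (hce : Corr Z ψ e1 e1') (hcs : ∀ s ∈ X.S, Corr Z ψ s (φ s)) {α : Ω} {α' : Ω'}
    (hα : Corr Z ψ {(α, α)} {(α', α')})
    {X1 : CohCfg ↥(eClass e1 α)} (hX1 : IsRestrictionCfg X (eClass e1 α) X1)
    {X1' : CohCfg ↥(eClass e1' α')}
    {φ1 : Set (↥(eClass e1 α) × ↥(eClass e1 α)) →
          Set (↥(eClass e1' α') × ↥(eClass e1' α'))}
    (hφ1 : ∀ s ∈ X.S, (restRel (eClass e1 α) s).Nonempty →
       φ1 (restRel (eClass e1 α) s) = restRel (eClass e1' α') (φ s))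
    {h : ↥(eClass e1 α) → ↥(eClass e1' α')} (hh : h ∈ IsoSet X1 X1' φ1)
    (hhα : h ⟨α, he1.2.1 α⟩ = ⟨α', he1'.2.1 α'⟩) {Z1 : CohCfg ↥(eClass e1 α)}
    (hZ1 : IsPointExt X1 ⟨α, he1.2.1 α⟩ Z1) (t) (ht : IsRelationOf Z1 t) :
    Corr Z ψ (lift (fun x (a : ↥(eClass e1 α)) => x = a.1) t)
      (lift (fun x' (a : ↥(eClass e1 α)) => x' = (h a).1) t) := by
  obtain ⟨hhb, hh⟩ := hh
  have hlm := fun t => lift_map (fun x' (a : ↥(eClass e1' α')) => x' = a.1) h hhb t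
  have hprod : Corr Z ψ (eClass e1 α ×ˢ eClass e1 α) (eClass e1' α' ×ˢ eClass e1' α') := by
    rw [prod_eq_comp he1, prod_eq_comp he1']
    exact corr_comp hψ (corr_comp hψ hce hα) hce
  refine rel_pointExt hψ (m := 1) ?_ ?_ one_pos ?_ ?_ ?_ ?_ X1 Z1 _ hZ1 ?_ ?_ t ht
  · intro x d d' h1 h2
    exact Subtype.ext (h1.symm.trans h2)
  · intro x d d' h1 h2
    exact hhb.1 (Subtype.ext (h1.symm.trans h2))
  · intro d
    simp
  · intro d
    simp
  · rw [hlm, relImage_univ hhb, lift_val_univ, lift_val_univ]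
    exact hprod
  · rw [hlm, relImage_diag hhb, lift_val_diag, lift_val_diag]
    exact corr_inter (corr_diag hψ) hprod
  · intro t ht
    rw [hlm, hh t ht]
    rw [hX1] at ht
    obtain ⟨s, hs, rfl, hne⟩ := ht
    rw [hφ1 s hs hne, lift_val_rest, lift_val_rest]
    exact corr_inter (hcs s hs) hprod
  · rw [hlm, relImage_single, hhα, lift_val_single, lift_val_single]
    exact hα

end star

/-- Commutativity transferred along an algebraic isomorphism. -/
theorem comm_swap {X : CohCfg Ω} {X' : CohCfg Ω'} {φ : Set (Ω × Ω) → Set (Ω' × Ω')}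
    (hφ : IsAlgIso X X' φ) (hcomm : IsCommutative X) {e : Set (Ω × Ω)} {e' : Set (Ω' × Ω')}
    (he : Corr X φ e e') {s : Set (Ω × Ω)} (hs : s ∈ X.S) {x z y : Ω'}
    (h1 : (x, z) ∈ e') (h2 : (z, y) ∈ φ s) : ∃ w, (x, w) ∈ φ s ∧ (w, y) ∈ e' := by
  obtain ⟨⟨a, b⟩, hab⟩ := rl_right hφ (x, y)
  obtain ⟨c, hc1, hc2⟩ := rl_ext' hφ hab z
  have hac := (he _ _ hc1).2 h1
  have hcb := (corr_basis hφ hs _ _ hc2).2 h2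
  obtain ⟨r, hr, har, -⟩ := hc1
  have := X.finite
  have hpos : 0 < cnum r s (a, b) := (Set.ncard_pos (Set.toFinite _)).2 ⟨c, har, hcb⟩
  rw [hcomm r hr s hs] at hpos
  obtain ⟨d, hd1, hd2⟩ := (Set.ncard_pos (Set.toFinite _)).1 hpos
  obtain ⟨w, hw1, hw2⟩ := rl_ext hφ hab d
  refine ⟨w, (corr_basis hφ hs _ _ hw1).1 hd1, ?_⟩
  refine (he _ _ hw2).1 ?_
  -- `(d, b)` lies in `r`, and `r` meets `e`
  obtain ⟨q, hq⟩ := X'.nonemp _ (hφ.bijOn.mapsTo hr)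
  exact (he _ q ⟨r, hr, hd2, hq⟩).2 ((he _ q ⟨r, hr, har, hq⟩).1 hac)

theorem card_class {X : CohCfg Ω} {e : Set (Ω × Ω)} (he : IsParabolic X e) (a : Ω) :
    (eClass e a).ncard = cnum e e (a, a) := by
  unfold cnum
  congr 1
  ext z
  exact ⟨fun h => ⟨h, par_symm he h⟩, fun h => h.1⟩

end CohCfg

open CohCfg in
/-- Lemma: let `X` be a sesquiclosed commutative scheme satisfying the
`e₁/e₀`-condition, `X'` a scheme, `φ : X → X'` a sesquiclosed algebraic
isomorphism, and `α, α'` points.  Assume (i) `X₀` and `X₁ = X_Δ` are schurian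
and `Iso(X₀,X'₀,φ₀) ≠ ∅ ≠ Iso(X₁,X'₁,φ₁)`, and (ii) `((X₀)_{α₀})_{Δ₀}` and
`((X₁)_α)_{Δ₀}` are partly regular.  Then
`Iso_{α₀,α'₀}(X₀,X'₀,φ₀)^{Δ₀} = Iso_{α,α'}(X₁,X'₁,φ₁)^{Δ₀}`. -/
theorem stmt_13 {Ω Ω' : Type u} (X : CohCfg Ω) (X' : CohCfg Ω')
    (hX : IsScheme X) (hcomm : IsCommutative X) (hsq : SesquiclosedCfg X)
    (hX' : IsScheme X')
    (e0 e1 : Set (Ω × Ω)) (he0 : IsParabolic X e0) (he1 : IsParabolic X e1)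
    (h01 : e0 ⊆ e1) (hw : WedgeCond X e0 e1)
    (φ : Set (Ω × Ω) → Set (Ω' × Ω')) (hφ : SesquiclosedIso X X' φ)
    (e0' e1' : Set (Ω' × Ω')) (he0' : e0' = algImage X φ e0)
    (he1' : e1' = algImage X φ e1)
    (he0'p : IsParabolic X' e0') (he1'p : IsParabolic X' e1')
    (α : Ω) (α' : Ω')
    -- the quotient configurations X₀, X'₀ and the induced φ₀
    (Y0 : CohCfg (Sec (univ : Set Ω) e0)) (hY0 : IsSectionCfg X univ e0 Y0)
    (Y0' : CohCfg (Sec (univ : Set Ω') e0')) (hY0' : IsSectionCfg X' univ e0' Y0')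
    (φ0 : Set (Sec (univ : Set Ω) e0 × Sec (univ : Set Ω) e0) →
          Set (Sec (univ : Set Ω') e0' × Sec (univ : Set Ω') e0'))
    (hφ0 : ∀ s ∈ X.S, φ0 (secRel univ e0 s) = secRel univ e0' (φ s))
    -- the restrictions X₁ = X_Δ, X'₁ = X'_{Δ'} and the induced φ₁
    (X1 : CohCfg ↥(eClass e1 α)) (hX1 : IsRestrictionCfg X (eClass e1 α) X1)
    (X1' : CohCfg ↥(eClass e1' α')) (hX1' : IsRestrictionCfg X' (eClass e1' α') X1')
    (φ1 : Set (↥(eClass e1 α) × ↥(eClass e1 α)) →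
          Set (↥(eClass e1' α') × ↥(eClass e1' α')))
    (hφ1 : ∀ s ∈ X.S, (restRel (eClass e1 α) s).Nonempty →
       φ1 (restRel (eClass e1 α) s) = restRel (eClass e1' α') (φ s))
    -- hypothesis (i)
    (hsch0 : Schurian Y0) (hsch1 : Schurian X1)
    (hne0 : (IsoSet Y0 Y0' φ0).Nonempty) (hne1 : (IsoSet X1 X1' φ1).Nonempty)
    -- hypothesis (ii): ((X₀)_{α₀})_{Δ₀} is partly regular
    (hpr0 : ∀ Z0 : CohCfg (Sec (univ : Set Ω) e0),
       IsPointExt Y0 (⟨eClass e0 α, α, mem_univ α, rfl⟩ : Sec (univ : Set Ω) e0) Z0 →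
       ∀ W : CohCfg ↥{G : Sec (univ : Set Ω) e0 | (G.1 ∩ eClass e1 α).Nonempty},
         IsRestrictionCfg Z0 {G | (G.1 ∩ eClass e1 α).Nonempty} W → PartlyRegular W)
    -- hypothesis (ii): ((X₁)_α)_{Δ₀} is partly regular
    (hpr1 : ∀ Z1 : CohCfg ↥(eClass e1 α),
       IsPointExt X1 (⟨α, he1.2.1 α⟩ : ↥(eClass e1 α)) Z1 →
       ∀ W : CohCfg (Sec (univ : Set ↥(eClass e1 α)) (restRel (eClass e1 α) e0)),
         IsSectionCfg Z1 univ (restRel (eClass e1 α) e0) W → PartlyRegular W) :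
    {k : Sec (eClass e1 α) e0 → Sec (eClass e1' α') e0' |
      ∃ g ∈ IsoSet Y0 Y0' φ0,
        g ⟨eClass e0 α, α, mem_univ α, rfl⟩ =
          ⟨eClass e0' α', α', mem_univ α', rfl⟩ ∧
        (∀ G : Sec (univ : Set Ω) e0, (G.1 ∩ eClass e1 α).Nonempty →
          ((g G).1 ∩ eClass e1' α').Nonempty) ∧
        ∀ (Γ : Sec (eClass e1 α) e0) (G : Sec (univ : Set Ω) e0),
          Γ.1 = G.1 → (k Γ).1 = (g G).1} =
    {k : Sec (eClass e1 α) e0 → Sec (eClass e1' α') e0' |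
      ∃ h ∈ IsoSet X1 X1' φ1,
        h ⟨α, he1.2.1 α⟩ = ⟨α', he1'p.2.1 α'⟩ ∧
        relImage h (restRel (eClass e1 α) e0) = restRel (eClass e1' α') e0' ∧
        ∀ (Γ : Sec (eClass e1 α) e0) (a : ↥(eClass e1 α)),
          a.1 ∈ Γ.1 → (h a).1 ∈ (k Γ).1} := by
  have hφa := hφ.1
  have hfin := X.finite
  have hfin' := X'.finite
  have hc0 : Corr X φ e0 e0' := he0' ▸ corr_algImage hφa he0.1
  have hc1 : Corr X φ e1 e1' := he1' ▸ corr_algImage hφa he1.1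
  -- diagonal pairs correspond
  have hdd : ∀ (x : Ω) (x' : Ω'), Rl X φ (x, x) (x', x') := by
    intro x x'
    obtain ⟨⟨a, a2⟩, hr⟩ := rl_right hφa (x', x')
    have := (rl_diag hφa hr).2 rfl
    subst this
    obtain ⟨t, ht, hat, hxt⟩ := hr
    have e := eq_of_mem X ht hX hat (show (a, a) ∈ {p : Ω × Ω | p.1 = p.2} from rfl)
    refine ⟨t, ht, ?_, hxt⟩
    rw [e]
    rfl
  have hm : ∀ a, (eClass e0 a).ncard = (eClass e0' α').ncard := by
    intro a
    rw [card_class he0, card_class he0'p]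
    exact cnum_corr hφa (hdd a α') hc0 hc0
  have hm' : ∀ a', (eClass e0' a').ncard = (eClass e0' α').ncard := by
    intro a'
    rw [← hm α, card_class he0, card_class he0'p]
    exact (cnum_corr hφa (hdd α a') hc0 hc0).symm
  have hm0 : 0 < (eClass e0' α').ncard :=
    (Set.ncard_pos (Set.toFinite _)).2 ⟨α', par_mem_eClass he0'p α'⟩
  -- the extension of `φ`
  have hdu : diagRel (univ : Set Ω) = {p : Ω × Ω | p.1 = p.2} := by
    ext p
    simp [diagRel]
  obtain ⟨Z, Z', ψ, hZ, hZ', hψ, hext, hψα⟩ : HasExtension X X' φ α α' := by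
    refine hφ.2 univ ?_ α (mem_univ _) α' ?_
    · unfold IsFiber
      rw [hdu]
      exact hX
    · change (α', α') ∈ φ (diagRel univ)
      rw [hdu]
      exact (corr_basis hφa hX _ _ (hdd α α')).1 rfl
  have hsub : ∀ p q, Rl Z ψ p q → Rl X φ p q := by
    rintro p q ⟨t, ht, hp, hq⟩
    obtain ⟨s, hs, hps⟩ := X.cover p
    refine ⟨s, hs, hps, ?_⟩
    rw [← hext s hs]
    exact ⟨ψ t, ⟨t, ⟨ht, hZ.1 s hs t ht ⟨p, hp, hps⟩⟩, rfl⟩, hq⟩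
  have hmono : ∀ {s s'}, Corr X φ s s' → Corr Z ψ s s' := fun h p q hpq => h p q (hsub p q hpq)
  have hα : Corr Z ψ {(α, α)} {(α', α')} := hψα ▸ corr_basis hψ hZ.2.1
  have hcs : ∀ s ∈ X.S, Corr Z ψ s (φ s) := fun s hs => hmono (corr_basis hφa hs)
  have hsY : ∀ s ∈ X.S, secRel univ e0 s ∈ Y0.S := by
    intro s hs
    rw [hY0]
    obtain ⟨⟨a, b⟩, hab⟩ := X.nonemp s hs
    exact ⟨s, hs, rfl, (cl e0 a, cl e0 b), a, par_mem_eClass he0 a, b, par_mem_eClass he0 b, hab⟩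
  -- choosing representatives
  have lower : ∀ g ∈ IsoSet Y0 Y0' φ0, g (cl e0 α) = cl e0' α' → ∀ s ∈ X.S, ∀ b, (α, b) ∈ s →
      ∃ b' ∈ (g (cl e0 b)).1, (α', b') ∈ φ s := by
    intro g hg hgα s hs b hab
    have h1 : (g (cl e0 α), g (cl e0 b)) ∈ relImage g (secRel univ e0 s) :=
      ⟨(cl e0 α, cl e0 b), ⟨α, par_mem_eClass he0 α, b, par_mem_eClass he0 b, hab⟩, rfl⟩
    rw [hg.2 _ (hsY s hs), hφ0 s hs, hgα] at h1
    obtain ⟨a', ha', y', hy', hay⟩ := h1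
    obtain ⟨w, hw1, hw2⟩ := comm_swap hφa hcomm hc0 hs (x := α') ha' hay
    refine ⟨w, ?_, hw1⟩
    rw [sec_eq he0'p _ hy']
    exact par_symm he0'p hw2
  -- the fibers of the point extension
  have fib : ∀ s ∈ X.S, ∀ b b', (α, b) ∈ s → (α', b') ∈ φ s → Rl Z ψ (b, b) (b', b') := by
    intro s hs b b' hb hb'
    obtain ⟨⟨a, a2⟩, hr⟩ := rl_right hψ (b', b')
    have := (rl_diag hψ hr).2 rfl
    subst this
    have hC : Corr Z ψ (comp univ (comp {(α, α)} s)) (comp univ (comp {(α', α')} (φ s))) :=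
      corr_comp hψ corr_univ (corr_comp hψ hα (hcs s hs))
    obtain ⟨z, -, z2, hz, hz2⟩ := (hC _ _ hr).2 ⟨α', trivial, α', rfl, hb'⟩
    have hz3 : z2 = α := (Prod.ext_iff.1 hz).2
    subst hz3
    have hf : diagRel (pointSet s z2) ∈ Z.S :=
      (hsq.1 z2 Z hZ (pointSet s z2)).2 ⟨s, hs, rfl, ⟨b, hb⟩⟩
    obtain ⟨t, ht, hat, hbt⟩ := hr
    have e := eq_of_mem Z ht hf hat ⟨rfl, hz2⟩
    refine ⟨t, ht, ?_, hbt⟩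
    rw [e]
    exact ⟨rfl, hb⟩
  obtain ⟨Z0, hZ0, b, hb, hreg0⟩ := reg0 he0 he1 h01 α Y0 hY0 hpr0
  obtain ⟨Z1, hZ1, b1, hreg1⟩ := reg1 he0 he1 h01 α hm0 hm X1 hX1 hpr1
  -- isomorphisms of the restrictions respect corresponding pairs
  have hRl : ∀ h ∈ IsoSet X1 X1' φ1, ∀ x y : ↥(eClass e1 α),
      Rl X φ (x.1, y.1) ((h x).1, (h y).1) := by
    intro h hh x y
    obtain ⟨s, hs, hxy⟩ := X.cover (x.1, y.1)
    have hne : (restRel (eClass e1 α) s).Nonempty := ⟨(x, y), hxy⟩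
    have hsX : restRel (eClass e1 α) s ∈ X1.S := by
      rw [hX1]
      exact ⟨s, hs, rfl, hne⟩
    have h1 : (h x, h y) ∈ relImage h (restRel (eClass e1 α) s) := ⟨(x, y), hxy, rfl⟩
    rw [hh.2 _ hsX, hφ1 s hs hne] at h1
    exact ⟨s, hs, hxy, h1⟩
  have agree : ∀ g ∈ IsoSet Y0 Y0' φ0, g (cl e0 α) = cl e0' α' →
      ∀ h ∈ IsoSet X1 X1' φ1, h ⟨α, he1.2.1 α⟩ = ⟨α', he1'p.2.1 α'⟩ →
      (h b1).1 ∈ (g (cl e0 b1.1)).1 →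
      ∀ c : ↥(eClass e1 α), g (cl e0 c.1) = cl e0' (h c).1 := by
    intro g hg hgα h hh hhα hgh c
    obtain ⟨s, hs, hab⟩ := X.cover (α, b)
    obtain ⟨b', hb'g, hb's⟩ := lower g hg hgα s hs b hab
    have hbb := fib s hs b b' hab hb's
    have stepg : ∀ c ∈ eClass e1 α, ∀ c', Rl Z ψ (b, c) (b', c') → c' ∈ (g (cl e0 c)).1 := by
      intro c hc c' hr
      obtain ⟨t, ht, htm, htu⟩ := hreg0 c hc
      have hcor := star0 hψ he0 he0'p hm0 hm hm' (hmono hc0) hcs hα hY0 hφ0 hg hgα hZ0 t ht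
      obtain ⟨d, d', h1, h2, h3⟩ := (hcor _ _ hr).1
        ⟨cl e0 b, cl e0 c, par_mem_eClass he0 b, par_mem_eClass he0 c, htm⟩
      have e : d = cl e0 b := hg.1.1 ((sec_eq_mk he0'p _ h1).trans (sec_eq_mk he0'p _ hb'g).symm)
      subst e
      have e2 := htu d' h3
      subst e2
      exact h2
    obtain ⟨x', hx', -⟩ := rl_ext hψ hbb b1.1
    obtain ⟨y', hy', hyx⟩ := rl_ext hψ hx' c.1
    have hxg := stepg b1.1 b1.2 x' hx'
    have hyg := stepg c.1 c.2 y' hy'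
    have hcx := rl_conv hψ hyx
    have hxh : ((h b1).1, x') ∈ e0' := by
      rw [sec_eq he0'p _ hgh] at hxg
      exact hxg
    obtain ⟨t, ht, htm, htu⟩ := hreg1 c
    have hcor := star1 hψ he1 he1'p (hmono hc1) hcs hα hX1 hφ1 hh hhα hZ1 t ht
    obtain ⟨u, v, h1, h2, h3⟩ := (hcor _ _ hcx).1 ⟨b1, c, rfl, rfl, htm⟩
    simp only at h1 h2
    subst h1 h2
    have h4 := htu u v h3 ((hc0 _ _ (hRl h hh b1 u)).2 hxh)
    have h5 := (hc0 _ _ (hRl h hh c v)).1 h4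
    rw [sec_eq_mk he0'p _ hyg]
    exact (sec_mk_eq he0'p h5).symm
  obtain ⟨s, hs, hab1⟩ := X.cover (α, b1.1)
  ext k
  constructor
  · rintro ⟨g, hg, hgα, -, hk⟩
    obtain ⟨b', hb'g, hb's⟩ := lower g hg hgα s hs b1.1 hab1
    have hb'1 : (α', b') ∈ e1' := (hc1 _ _ ⟨s, hs, hab1, hb's⟩).1 b1.2
    have hne : (restRel (eClass e1 α) s).Nonempty := ⟨(⟨α, he1.2.1 α⟩, b1), hab1⟩
    have hsX : restRel (eClass e1 α) s ∈ X1.S := by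
      rw [hX1]
      exact ⟨s, hs, rfl, hne⟩
    obtain ⟨h, hh, hhα, hhb⟩ := exists_iso hsch1 hne1 hsX
      (x := ⟨α, he1.2.1 α⟩) (y := b1) (x' := ⟨α', he1'p.2.1 α'⟩) (y' := ⟨b', hb'1⟩) hab1 (by
        rw [hφ1 s hs hne]
        exact hb's)
    refine ⟨h, hh, hhα, ?_, ?_⟩
    · ext ⟨x, y⟩
      obtain ⟨x, rfl⟩ := hh.1.2 x
      obtain ⟨y, rfl⟩ := hh.1.2 y
      rw [mem_relImage hh.1.1]
      exact hc0 _ _ (hRl h hh x y)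
    · intro Γ a ha
      have e := hk Γ (cl e0 a.1) (sec_eq he0 Γ ha)
      rw [e, agree g hg hgα h hh hhα (by rw [hhb]; exact hb'g) a]
      exact par_mem_eClass he0'p _
  · rintro ⟨h, hh, hhα, -, hk⟩
    have hr := hRl h hh ⟨α, he1.2.1 α⟩ b1
    rw [hhα] at hr
    have hb's := (corr_basis hφa hs _ _ hr).1 hab1
    obtain ⟨g, hg, hgα, hgb⟩ := exists_iso hsch0 hne0 (hsY s hs)
      (x := cl e0 α) (y := cl e0 b1.1) (x' := cl e0' α') (y' := cl e0' (h b1).1)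
      ⟨α, par_mem_eClass he0 α, b1.1, par_mem_eClass he0 b1.1, hab1⟩ (by
        rw [hφ0 s hs]
        exact ⟨α', par_mem_eClass he0'p α', (h b1).1, par_mem_eClass he0'p _, hb's⟩)
    have hag := agree g hg hgα h hh hhα (by rw [hgb]; exact par_mem_eClass he0'p _)
    refine ⟨g, hg, hgα, ?_, ?_⟩
    · rintro G ⟨x, hxG, hx⟩
      rw [sec_eq_mk he0 G hxG, hag ⟨x, hx⟩]
      exact ⟨_, par_mem_eClass he0'p _, (h ⟨x, hx⟩).2⟩
    · intro Γ G hΓ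
      obtain ⟨a, ha, hΓa⟩ := Γ.2
      have haΓ : a ∈ Γ.1 := by
        rw [hΓa]
        exact par_mem_eClass he0 a
      rw [sec_eq_mk he0 G (hΓ ▸ haΓ), hag ⟨a, ha⟩]
      exact sec_eq he0'p _ (hk Γ ⟨a, ha⟩ haΓ)
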